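/- arXiv:math/0703385 — 12 statements merged into one kernel-verified Lean document; each statement's English description precedes it below -/
import Mathlib

section
/- Let λ ∈ (0,1) and t₀ ∈ ℝ. If the limit of the partial products lim_{N→∞} ∏_{n=0}^{N} cos(λⁿ t₀) exists and equals 0, then cos(λⁿ t₀) = 0 for some n ∈ ℕ₀; i.e., if the infinite product ∏_{n=0}^{∞} cos(λⁿ t₀) is zero then one of its factors must be zero. -/
/-!
Since `0 ≤ 1 - cos x ≤ x² / 2`, the deviations of the factors `cos (λⁿ t₀)` from `1` are dominated
by the geometric series `∑ λ²ⁿ t₀² / 2`, so the product converges absolutely. An absolutely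
convergent product without zero factors has a nonzero value
(`tprod_one_add_ne_zero_of_summable`), and this value is the limit of the partial products.
-/

open Filter

/-- Let `λ ∈ (0,1)` and `t₀ ∈ ℝ`.  If the limit of the partial products
`∏_{n=0}^{N} cos(λⁿ t₀)` exists and equals `0`, then `cos(λⁿ t₀) = 0` for some `n`. -/
theorem infinite_product_zero_iff_factor_zero
    (l : ℝ) (hl : l ∈ Set.Ioo (0 : ℝ) 1) (t₀ : ℝ)
    (h : Tendsto (fun N : ℕ => ∏ n ∈ Finset.range (N + 1), Real.cos (l ^ n * t₀))
      atTop (nhds 0)) :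
    ∃ n : ℕ, Real.cos (l ^ n * t₀) = 0 := by
  by_contra! hne
  have hsum : Summable fun n : ℕ => ‖Real.cos (l ^ n * t₀) - 1‖ := by
    have hgeom : Summable fun n : ℕ => (l ^ 2) ^ n * (t₀ ^ 2 / 2) :=
      (summable_geometric_of_lt_one (sq_nonneg l)
        (pow_lt_one₀ hl.1.le hl.2 two_ne_zero)).mul_right _
    refine hgeom.of_nonneg_of_le (fun _ => norm_nonneg _) fun n => ?_
    have hcos := Real.one_sub_sq_div_two_le_cos (x := l ^ n * t₀)
    have hsq : (l ^ n * t₀) ^ 2 / 2 = (l ^ 2) ^ n * (t₀ ^ 2 / 2) := by ring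
    rw [Real.norm_eq_abs, abs_of_nonpos (by linarith [Real.cos_le_one (l ^ n * t₀)])]
    linarith
  have hprod : ∏' n : ℕ, (1 + (Real.cos (l ^ n * t₀) - 1)) ≠ 0 :=
    tprod_one_add_ne_zero_of_summable (by simpa using hne) hsum
  have hlim := (multipliable_one_add_of_summable hsum).hasProd.tendsto_prod_nat
  simp only [add_sub_cancel] at hprod hlim
  exact hprod (tendsto_nhds_unique ((tendsto_add_atTop_iff_nat 1).2 hlim) h)
end

section
/- For t ∈ ℝ, the infinite product ∏_{n=0}^{∞} cos(2π(3/4)ⁿ t) (the limit of its partial products) equals zero if and only if t belongs to the set 𝒪 = {4^{n−1}(2m+1)/3ⁿ : n ∈ ℕ₀, m ∈ ℤ}; that is, if and only if t = (1/4)(4/3)ⁿ(2m+1) for some n ∈ ℕ₀ and m ∈ ℤ. -/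
/-!
Since `|cos x - 1| ≤ x² / 2`, the deviations `cos (2π(3/4)ⁿt) - 1` are dominated by a geometric
series of ratio `9/16`, so the product converges absolutely. An absolutely convergent product
vanishes only if one of its factors does (`tprod_one_add_ne_zero_of_summable`), and the `n`-th
factor vanishes exactly when `2π(3/4)ⁿt` is an odd multiple of `π/2`, i.e. when
`t = (1/4)(4/3)ⁿ(2m+1)` for some integer `m`.
-/

open Filter

/-- The set `𝒪 = {4^{n−1}(2m+1)/3ⁿ : n ∈ ℕ₀, m ∈ ℤ} = {(1/4)(4/3)ⁿ(2m+1) : n ∈ ℕ₀, m ∈ ℤ}`. -/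
def OsetThreeFourths : Set ℝ :=
  {x : ℝ | ∃ (n : ℕ) (m : ℤ), x = (1 / 4) * (4 / 3 : ℝ) ^ n * (2 * (m : ℝ) + 1)}

lemma cos_factor_eq_zero_iff (t : ℝ) (n : ℕ) :
    Real.cos (2 * Real.pi * (3 / 4 : ℝ) ^ n * t) = 0
      ↔ ∃ m : ℤ, t = (1 / 4) * (4 / 3 : ℝ) ^ n * (2 * (m : ℝ) + 1) := by
  rw [Real.cos_eq_zero_iff]
  refine exists_congr fun m => ?_
  have hpow : (4 / 3 : ℝ) ^ n * (3 / 4 : ℝ) ^ n = 1 := by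
    rw [← mul_pow]
    norm_num
  constructor
  · intro h
    have h1 : (3 / 4 : ℝ) ^ n * t = (2 * (m : ℝ) + 1) / 4 := by
      apply mul_left_cancel₀ (mul_ne_zero two_ne_zero Real.pi_ne_zero)
      linear_combination h
    linear_combination (4 / 3 : ℝ) ^ n * h1 - t * hpow
  · intro h
    linear_combination 2 * Real.pi * (3 / 4 : ℝ) ^ n * h
      + Real.pi / 2 * (2 * (m : ℝ) + 1) * hpow

lemma summable_norm_cos_sub_one (t : ℝ) :
    Summable fun n : ℕ => ‖Real.cos (2 * Real.pi * (3 / 4 : ℝ) ^ n * t) - 1‖ := by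
  have hgeom : Summable fun n : ℕ => (2 * Real.pi * t) ^ 2 / 2 * (9 / 16 : ℝ) ^ n :=
    (summable_geometric_of_lt_one (by norm_num) (by norm_num)).mul_left _
  refine hgeom.of_nonneg_of_le (fun n => norm_nonneg _) fun n => ?_
  have hlow := Real.one_sub_sq_div_two_le_cos (x := 2 * Real.pi * (3 / 4 : ℝ) ^ n * t)
  have hsq : (2 * Real.pi * (3 / 4 : ℝ) ^ n * t) ^ 2 = (2 * Real.pi * t) ^ 2 * (9 / 16 : ℝ) ^ n := by
    rw [show (9 / 16 : ℝ) = (3 / 4) ^ 2 by norm_num, ← pow_mul, mul_comm 2 n, pow_mul]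
    ring
  rw [Real.norm_eq_abs, abs_of_nonpos (sub_nonpos.mpr (Real.cos_le_one _))]
  linarith

/-- For `t ∈ ℝ`, the infinite product `∏_{n=0}^{∞} cos(2π(3/4)ⁿ t)` (the limit of its
partial products) equals zero if and only if `t ∈ 𝒪`. -/
theorem infinite_product_three_fourths_zero_iff
    (t : ℝ) :
    Tendsto (fun N : ℕ => ∏ n ∈ Finset.range (N + 1),
        Real.cos (2 * Real.pi * (3 / 4 : ℝ) ^ n * t)) atTop (nhds 0)
      ↔ t ∈ OsetThreeFourths := by
  constructor
  · intro h
    by_contra hnot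
    have hne : ∀ n : ℕ, 1 + (Real.cos (2 * Real.pi * (3 / 4 : ℝ) ^ n * t) - 1) ≠ 0 := by
      intro n h0
      rw [add_sub_cancel] at h0
      exact hnot ⟨n, (cos_factor_eq_zero_iff t n).mp h0⟩
    have hs := summable_norm_cos_sub_one t
    have hlim := (multipliable_one_add_of_summable hs).hasProd.tendsto_prod_nat.comp
      (tendsto_add_atTop_nat 1)
    refine tprod_one_add_ne_zero_of_summable hne hs (tendsto_nhds_unique hlim ?_)
    simpa only [Function.comp_def, add_sub_cancel] using h
  · rintro ⟨n, hn⟩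
    -- Every partial product containing the vanishing `n`-th factor is zero.
    refine tendsto_const_nhds.congr' ?_
    filter_upwards [eventually_ge_atTop n] with N hN
    exact (Finset.prod_eq_zero (Finset.mem_range.mpr (Nat.lt_succ_of_le hN))
      ((cos_factor_eq_zero_iff t n).mpr hn)).symm
end

section
/- Let ν be a Borel probability measure on ℝ with no atoms satisfying ν = (1/2)(ν ∘ τ₊⁻¹) + (1/2)(ν ∘ τ₋⁻¹) for τ₊(x) = (3/4)x + 1 and τ₋(x) = (3/4)x − 1. For ℓ, ℓ' ∈ ℝ, the exponential functions e_ℓ and e_{ℓ'} are orthogonal in L²(ν) (i.e., ∫ e^{2πiℓx} · e^{−2πiℓ'x} dν(x) = 0) if and only if ℓ − ℓ' ∈ 𝒪 = {4^{n−1}(2m+1)/3ⁿ : n ∈ ℕ₀, m ∈ ℤ}. -/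
/-!
Let `C` be the characteristic function of `ν`. The Hutchinson invariance becomes the functional
equation `C s = cos s * C (3/4 * s)` (`charFun_hutchinson`), and the inner product of the two
exponentials is `C (2 * π * (ℓ - ℓ'))`. If some factor `cos ((3/4)^n * s)` vanishes, iterating the
equation gives `C s = 0`. Conversely, if `C s = 0` and no such factor vanishes, then
`C ((3/4)^n * s) = 0` for all `n`, which contradicts continuity at `0`, where `C 0 = 1`. Hence the
zeros of `C` are exactly the points `s` with `cos ((3/4)^n * s) = 0` for some `n`
(`charFun_eq_zero_iff`), and solving for `s = 2 * π * t` gives `t ∈ 𝒪`.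
-/

open MeasureTheory
open scoped ENNReal

lemma charFun_hutchinson (ν : Measure ℝ) [IsProbabilityMeasure ν]
    (hinv : ν = (1 / 2 : ℝ≥0∞) • Measure.map (fun x : ℝ => (3 / 4 : ℝ) * x + 1) ν
              + (1 / 2 : ℝ≥0∞) • Measure.map (fun x : ℝ => (3 / 4 : ℝ) * x - 1) ν) (s : ℝ) :
    charFun ν s = (Real.cos s : ℂ) * charFun ν (3 / 4 * s) := by
  have hint : ∀ (μ : Measure ℝ) [IsFiniteMeasure μ],
      Integrable (fun x : ℝ => Complex.exp (s * x * Complex.I)) μ := by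
    intro μ _
    refine (integrable_const (1 : ℝ)).mono' (by fun_prop) (ae_of_all _ fun x => ?_)
    rw [← Complex.ofReal_mul, Complex.norm_exp_ofReal_mul_I]
  -- an affine change of variables multiplies the characteristic function by a phase
  have hmap : ∀ b : ℝ, ∫ x, Complex.exp (s * x * Complex.I)
        ∂((1 / 2 : ℝ≥0∞) • Measure.map (fun x : ℝ => (3 / 4 : ℝ) * x + b) ν)
      = (1 / 2 : ℂ) * (Complex.exp (s * b * Complex.I) * charFun ν (3 / 4 * s)) := by
    intro b
    rw [integral_smul_measure, integral_map (by fun_prop) (by fun_prop), charFun_apply_real,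
      ← integral_const_mul]
    have h2 : ((1 / 2 : ℝ≥0∞).toReal) = 1 / 2 := by simp
    rw [h2, Complex.real_smul]
    push_cast
    congr 1
    refine integral_congr_ae (ae_of_all _ fun x => ?_)
    simp only
    rw [← Complex.exp_add]
    congr 1
    ring
  have hp := hmap 1
  have hm := hmap (-1)
  simp only [← sub_eq_add_neg] at hm
  have := Measure.isProbabilityMeasure_map (μ := ν) (f := fun x : ℝ => (3 / 4 : ℝ) * x + 1)
    (by fun_prop)
  have := Measure.isProbabilityMeasure_map (μ := ν) (f := fun x : ℝ => (3 / 4 : ℝ) * x - 1)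
    (by fun_prop)
  have h := integral_add_measure
    ((hint (Measure.map (fun x : ℝ => (3 / 4 : ℝ) * x + 1) ν)).smul_measure
      (c := (1 / 2 : ℝ≥0∞)) (by simp))
    ((hint (Measure.map (fun x : ℝ => (3 / 4 : ℝ) * x - 1) ν)).smul_measure
      (c := (1 / 2 : ℝ≥0∞)) (by simp))
  rw [← hinv, ← charFun_apply_real] at h
  rw [h, hp, hm, Complex.ofReal_cos, Complex.cos]
  push_cast
  ring_nf

lemma charFun_eq_zero_iff (ν : Measure ℝ) [IsProbabilityMeasure ν]
    (h : ∀ s : ℝ, charFun ν s = (Real.cos s : ℂ) * charFun ν (3 / 4 * s)) (s : ℝ) :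
    charFun ν s = 0 ↔ ∃ n : ℕ, Real.cos ((3 / 4) ^ n * s) = 0 := by
  constructor
  · intro h0
    by_contra! hne
    have hz : ∀ n : ℕ, charFun ν ((3 / 4) ^ n * s) = 0 := by
      intro n
      induction n with
      | zero => simpa using h0
      | succ n ih =>
        rw [h] at ih
        have := (mul_eq_zero.mp ih).resolve_left (by exact_mod_cast hne n)
        rwa [pow_succ', mul_assoc]
    have hlim : Filter.Tendsto (fun n : ℕ => charFun ν ((3 / 4 : ℝ) ^ n * s)) Filter.atTop
        (nhds (charFun ν (0 * s))) :=
      (continuous_charFun.tendsto _).comp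
        ((tendsto_pow_atTop_nhds_zero_of_lt_one (by norm_num) (by norm_num)).mul_const s)
    simp only [hz] at hlim
    have := tendsto_nhds_unique hlim tendsto_const_nhds
    simp at this
  · rintro ⟨n, hn⟩
    induction n generalizing s with
    | zero => rw [h]; simp at hn; simp [-Complex.ofReal_cos, hn]
    | succ n ih =>
      rw [h, ih (3 / 4 * s) (by rwa [← mul_assoc, ← pow_succ]), mul_zero]

/-- Let `ν` be an atomless Borel probability measure on `ℝ` satisfying the Hutchinson
invariance for `τ±(x) = (3/4)x ± 1`.  For `ℓ, ℓ' ∈ ℝ`, the exponentials `e_ℓ` and `e_{ℓ'}`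
are orthogonal in `L²(ν)` if and only if `ℓ − ℓ' ∈ 𝒪`. -/
theorem exponentials_orthogonal_iff_diff_mem_Oset
    (ν : Measure ℝ) [IsProbabilityMeasure ν]
    (hatom : ∀ x : ℝ, ν {x} = 0)
    (hinv : ν = (1 / 2 : ℝ≥0∞) • Measure.map (fun x : ℝ => (3 / 4 : ℝ) * x + 1) ν
              + (1 / 2 : ℝ≥0∞) • Measure.map (fun x : ℝ => (3 / 4 : ℝ) * x - 1) ν)
    (ℓ ℓ' : ℝ) :
    (∫ x : ℝ, Complex.exp (2 * Real.pi * Complex.I * ℓ * x)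
        * (starRingEnd ℂ) (Complex.exp (2 * Real.pi * Complex.I * ℓ' * x)) ∂ν) = 0
      ↔ ℓ - ℓ' ∈ OsetThreeFourths := by
  have key : (∫ x : ℝ, Complex.exp (2 * Real.pi * Complex.I * ℓ * x)
        * (starRingEnd ℂ) (Complex.exp (2 * Real.pi * Complex.I * ℓ' * x)) ∂ν)
      = charFun ν (2 * Real.pi * (ℓ - ℓ')) := by
    rw [charFun_apply_real]
    refine integral_congr_ae (ae_of_all _ fun x => ?_)
    simp only
    rw [← Complex.exp_conj, ← Complex.exp_add]
    congr 1
    simp only [map_mul, Complex.conj_ofReal, Complex.conj_I, map_ofNat]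
    push_cast
    ring
  rw [key, charFun_eq_zero_iff ν (charFun_hutchinson ν hinv)]
  refine exists_congr fun n => ?_
  rw [Real.cos_eq_zero_iff]
  refine exists_congr fun m => ?_
  have hpow : (3 / 4 : ℝ) ^ n * (4 / 3) ^ n = 1 := by rw [← mul_pow]; norm_num
  have hpi := Real.pi_ne_zero
  constructor
  · intro h
    apply mul_left_cancel₀ hpi
    linear_combination (4 / 3 : ℝ) ^ n / 2 * h - Real.pi * (ℓ - ℓ') * hpow
  · intro h
    rw [h]
    linear_combination (Real.pi * (2 * m + 1) / 2) * hpow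
end

section
/- For each k ∈ ℕ with k ≥ 1, the set Λ_k = {4^j/3^k : j ∈ ℕ, j ≥ k−1} ∪ {0} is an infinite set of real numbers with the property that for every pair of distinct elements ℓ, ℓ' ∈ Λ_k, the difference ℓ − ℓ' lies in 𝒪 = {4^{n−1}(2m+1)/3ⁿ : n ∈ ℕ₀, m ∈ ℤ}. Consequently there exist infinitely many infinite sets Λ ⊂ ℝ (the sets Λ_k being pairwise distinct) whose associated exponentials are mutually orthogonal with respect to the Bernoulli convolution measure ν_{3/4}. -/
/-!
Write `F t = ∫ exp(2πitx) dν(x)`. Invariance of `ν` under the two contractions gives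
`F t = cos(2πt) · F(3t/4)` (`fourier_rescale`). At `t = (1/4)(2m+1)` the cosine vanishes, and
the relation carries this zero from `t` to `4t/3`, so `F` vanishes on all of `𝒪`
(`fourier_eq_zero`). Since `e_ℓ · conj e_ℓ'` is `exp(2πi(ℓ - ℓ')x)`, exponentials whose
frequencies differ by an element of `𝒪` are orthogonal.

The remaining part is arithmetic. For `i < j` the difference of two elements of `Λ_k` is
`4^i (4^(j-i) - 1) / 3^k`, and the difference with `0` is `4^i / 3^k`. As `i + 1 ≥ k`, multiplying
numerator and denominator by the odd number `3^(i+1-k)` gives `4^i · odd / 3^(i+1)`, an element of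
`𝒪` with `n = i + 1` (`mem_Oset_of_odd`). The sets `Λ_k` are distinct because the powers of `3` in
`4^i / 3^k = 4^j / 3^k'` must agree.
-/

open MeasureTheory
open scoped ENNReal

/-- The set `Λ_k = {4^j/3^k : j ∈ ℕ, j ≥ k−1} ∪ {0}`. -/
def LamSet (k : ℕ) : Set ℝ :=
  {x : ℝ | ∃ j : ℕ, k - 1 ≤ j ∧ x = (4 : ℝ) ^ j / (3 : ℝ) ^ k} ∪ {0}

/-- The Fourier transform of an invariant measure satisfies `F t = cos(2πt) · F(3t/4)`. -/
lemma fourier_rescale (ν : Measure ℝ) [IsProbabilityMeasure ν]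
    (hinv : ν = (1 / 2 : ℝ≥0∞) • Measure.map (fun x : ℝ => (3 / 4 : ℝ) * x + 1) ν
              + (1 / 2 : ℝ≥0∞) • Measure.map (fun x : ℝ => (3 / 4 : ℝ) * x - 1) ν) (t : ℝ) :
    (∫ x : ℝ, Complex.exp (2 * Real.pi * Complex.I * t * x) ∂ν)
      = Complex.cos (2 * Real.pi * t)
        * ∫ x : ℝ, Complex.exp (2 * Real.pi * Complex.I * ((3 / 4 * t : ℝ) : ℂ) * x) ∂ν := by
  have hcont : Continuous fun x : ℝ => Complex.exp (2 * Real.pi * Complex.I * t * x) := by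
    fun_prop
  have hint : ∀ μ : Measure ℝ, IsFiniteMeasure μ →
      Integrable (fun x : ℝ => Complex.exp (2 * Real.pi * Complex.I * t * x)) μ := by
    intro μ _
    refine Integrable.of_bound hcont.aestronglyMeasurable 1 (ae_of_all _ fun x => le_of_eq ?_)
    rw [show (2 * Real.pi * Complex.I * t * x : ℂ) = ((2 * Real.pi * t * x : ℝ) : ℂ) * Complex.I by
      push_cast; ring]
    exact Complex.norm_exp_ofReal_mul_I _
  conv_lhs => rw [hinv]
  rw [integral_add_measure ((hint _ inferInstance).smul_measure (by simp))
      ((hint _ inferInstance).smul_measure (by simp)),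
    integral_smul_measure, integral_smul_measure,
    integral_map (by fun_prop) hcont.aestronglyMeasurable,
    integral_map (by fun_prop) hcont.aestronglyMeasurable]
  have h1 : ∀ x : ℝ, Complex.exp (2 * Real.pi * Complex.I * t * ((3 / 4 * x + 1 : ℝ) : ℂ))
      = Complex.exp (2 * Real.pi * t * Complex.I)
        * Complex.exp (2 * Real.pi * Complex.I * ((3 / 4 * t : ℝ) : ℂ) * x) := by
    intro x
    rw [← Complex.exp_add]
    congr 1
    push_cast
    ring
  have h2 : ∀ x : ℝ, Complex.exp (2 * Real.pi * Complex.I * t * ((3 / 4 * x - 1 : ℝ) : ℂ))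
      = Complex.exp (-(2 * Real.pi * t) * Complex.I)
        * Complex.exp (2 * Real.pi * Complex.I * ((3 / 4 * t : ℝ) : ℂ) * x) := by
    intro x
    rw [← Complex.exp_add]
    congr 1
    push_cast
    ring
  simp only [h1, h2]
  rw [integral_const_mul, integral_const_mul, Complex.cos]
  have h3 : (1 / 2 : ℝ≥0∞).toReal = 1 / 2 := by simp
  rw [h3, Complex.real_smul, Complex.real_smul]
  push_cast
  ring

lemma fourier_eq_zero (ν : Measure ℝ) [IsProbabilityMeasure ν]
    (hinv : ν = (1 / 2 : ℝ≥0∞) • Measure.map (fun x : ℝ => (3 / 4 : ℝ) * x + 1) ν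
              + (1 / 2 : ℝ≥0∞) • Measure.map (fun x : ℝ => (3 / 4 : ℝ) * x - 1) ν)
    {t : ℝ} (ht : t ∈ OsetThreeFourths) :
    (∫ x : ℝ, Complex.exp (2 * Real.pi * Complex.I * t * x) ∂ν) = 0 := by
  obtain ⟨n, m, rfl⟩ := ht
  induction n with
  | zero =>
    rw [fourier_rescale ν hinv]
    have : Complex.cos (2 * Real.pi * ((1 / 4 * (4 / 3 : ℝ) ^ 0 * (2 * (m : ℝ) + 1) : ℝ) : ℂ)) = 0 := by
      rw [Complex.cos_eq_zero_iff]
      refine ⟨m, ?_⟩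
      push_cast
      ring
    rw [this, zero_mul]
  | succ n ih =>
    rw [fourier_rescale ν hinv]
    rw [show (3 / 4 * (1 / 4 * (4 / 3 : ℝ) ^ (n + 1) * (2 * (m : ℝ) + 1)) : ℝ)
      = 1 / 4 * (4 / 3 : ℝ) ^ n * (2 * (m : ℝ) + 1) by ring, ih, mul_zero]

lemma orthogonal_of_sub_mem (ν : Measure ℝ) [IsProbabilityMeasure ν]
    (hinv : ν = (1 / 2 : ℝ≥0∞) • Measure.map (fun x : ℝ => (3 / 4 : ℝ) * x + 1) ν
              + (1 / 2 : ℝ≥0∞) • Measure.map (fun x : ℝ => (3 / 4 : ℝ) * x - 1) ν)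
    {ℓ ℓ' : ℝ} (h : ℓ - ℓ' ∈ OsetThreeFourths) :
    (∫ x : ℝ, Complex.exp (2 * Real.pi * Complex.I * ℓ * x)
        * (starRingEnd ℂ) (Complex.exp (2 * Real.pi * Complex.I * ℓ' * x)) ∂ν) = 0 := by
  rw [← fourier_eq_zero ν hinv h]
  congr 1
  funext x
  rw [← Complex.exp_conj, ← Complex.exp_add]
  congr 1
  simp only [map_mul, Complex.conj_ofReal, Complex.conj_I, map_ofNat]
  push_cast
  ring

lemma mem_Oset_of_odd {i k : ℕ} (hk : k ≤ i + 1) {o : ℤ} (ho : Odd o) :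
    (4 : ℝ) ^ i / 3 ^ k * o ∈ OsetThreeFourths := by
  obtain ⟨d, hd⟩ := Nat.exists_eq_add_of_le hk
  obtain ⟨m, hm⟩ := ho.mul ((by decide : Odd (3 : ℤ)).pow (n := d))
  refine ⟨i + 1, m, ?_⟩
  have hm' : (o : ℝ) * 3 ^ d = 2 * m + 1 := by exact_mod_cast hm
  rw [← hm', div_pow, hd, pow_add 3 k d, ← hd, pow_succ]
  field_simp

lemma neg_mem_Oset {x : ℝ} (hx : x ∈ OsetThreeFourths) : -x ∈ OsetThreeFourths := by
  obtain ⟨n, m, rfl⟩ := hx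
  refine ⟨n, -m - 1, ?_⟩
  push_cast
  ring

lemma sub_mem_Oset_of_lt {i j k : ℕ} (hk : k ≤ i + 1) (hij : i < j) :
    (4 : ℝ) ^ j / 3 ^ k - 4 ^ i / 3 ^ k ∈ OsetThreeFourths := by
  obtain ⟨d, rfl⟩ := Nat.exists_eq_add_of_lt hij
  have ho : Odd ((4 : ℤ) ^ (d + 1) - 1) :=
    ((by decide : Even (4 : ℤ)).pow_of_ne_zero d.succ_ne_zero).sub_odd odd_one
  convert mem_Oset_of_odd hk ho using 1
  push_cast
  ring

lemma sub_mem_Oset {k : ℕ} {ℓ ℓ' : ℝ} (h : ℓ ∈ LamSet k) (h' : ℓ' ∈ LamSet k)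
    (hne : ℓ ≠ ℓ') : ℓ - ℓ' ∈ OsetThreeFourths := by
  have hzero : ∀ j : ℕ, k - 1 ≤ j → (4 : ℝ) ^ j / 3 ^ k ∈ OsetThreeFourths := fun j hj => by
    simpa using mem_Oset_of_odd (i := j) (k := k) (by omega) odd_one
  rcases h with ⟨j, hj, rfl⟩ | rfl <;> rcases h' with ⟨i, hi, rfl⟩ | rfl
  · rcases lt_trichotomy i j with hij | rfl | hij
    · exact sub_mem_Oset_of_lt (by omega) hij
    · exact absurd rfl hne
    · rw [← neg_sub]
      exact neg_mem_Oset (sub_mem_Oset_of_lt (by omega) hij)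
  · simpa using hzero j hj
  · simpa using neg_mem_Oset (hzero i hi)
  · exact absurd rfl hne

lemma LamSet_infinite (k : ℕ) : (LamSet k).Infinite := by
  refine Set.infinite_of_injective_forall_mem (f := fun j : ℕ => (4 : ℝ) ^ (j + k) / 3 ^ k) ?_
    fun j => Or.inl ⟨j + k, by omega, rfl⟩
  intro a b hab
  have h : (4 : ℝ) ^ (a + k) = 4 ^ (b + k) := (div_left_inj' (by positivity)).1 hab
  have := pow_right_injective₀ (by norm_num : (0 : ℝ) < 4) (by norm_num) h
  omega

/-- The power of `3` in the denominators can be read off from `Λ_k`. -/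
lemma le_of_LamSet_eq {k k' : ℕ} (h : LamSet k = LamSet k') : k ≤ k' := by
  have hmem : (4 : ℝ) ^ k / 3 ^ k ∈ LamSet k' := h ▸ Or.inl ⟨k, by omega, rfl⟩
  rcases hmem with ⟨j, -, hj⟩ | h0
  · rw [div_eq_div_iff (by positivity) (by positivity)] at hj
    have hN : 4 ^ k * 3 ^ k' = 4 ^ j * 3 ^ k := by exact_mod_cast hj
    have hdvd : 3 ^ k ∣ 4 ^ k * 3 ^ k' := hN ▸ Dvd.intro_left _ rfl
    have hcop : Nat.Coprime (3 ^ k) (4 ^ k) := Nat.Coprime.pow _ _ (by norm_num)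
    exact (Nat.pow_dvd_pow_iff_le_right (by norm_num)).1 (hcop.dvd_of_dvd_mul_left hdvd)
  · have hpos : (0 : ℝ) < 4 ^ k / 3 ^ k := by positivity
    exact absurd h0 (ne_of_gt hpos)

/-- For each `k ≥ 1`, the set `Λ_k` is an infinite set whose pairwise differences of
distinct elements lie in `𝒪`; the sets `Λ_k` are pairwise distinct, and consequently
there are infinitely many infinite sets `Λ ⊆ ℝ` whose associated exponentials are
mutually orthogonal with respect to the Bernoulli convolution measure `ν_{3/4}`. -/
theorem infinitely_many_infinite_orthogonal_families
    (ν : Measure ℝ) [IsProbabilityMeasure ν]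
    (hatom : ∀ x : ℝ, ν {x} = 0)
    (hinv : ν = (1 / 2 : ℝ≥0∞) • Measure.map (fun x : ℝ => (3 / 4 : ℝ) * x + 1) ν
              + (1 / 2 : ℝ≥0∞) • Measure.map (fun x : ℝ => (3 / 4 : ℝ) * x - 1) ν) :
    (∀ k : ℕ, 1 ≤ k → (LamSet k).Infinite) ∧
    (∀ k : ℕ, 1 ≤ k → ∀ ℓ ∈ LamSet k, ∀ ℓ' ∈ LamSet k, ℓ ≠ ℓ' →
      ℓ - ℓ' ∈ OsetThreeFourths) ∧
    (∀ k : ℕ, 1 ≤ k → ∀ ℓ ∈ LamSet k, ∀ ℓ' ∈ LamSet k, ℓ ≠ ℓ' →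
      (∫ x : ℝ, Complex.exp (2 * Real.pi * Complex.I * ℓ * x)
        * (starRingEnd ℂ) (Complex.exp (2 * Real.pi * Complex.I * ℓ' * x)) ∂ν) = 0) ∧
    (∀ k k' : ℕ, 1 ≤ k → 1 ≤ k' → k ≠ k' → LamSet k ≠ LamSet k') ∧
    {Λ : Set ℝ | Λ.Infinite ∧ ∀ ℓ ∈ Λ, ∀ ℓ' ∈ Λ, ℓ ≠ ℓ' →
      (∫ x : ℝ, Complex.exp (2 * Real.pi * Complex.I * ℓ * x)
        * (starRingEnd ℂ) (Complex.exp (2 * Real.pi * Complex.I * ℓ' * x)) ∂ν) = 0}.Infinite := by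
  have horth : ∀ k : ℕ, ∀ ℓ ∈ LamSet k, ∀ ℓ' ∈ LamSet k, ℓ ≠ ℓ' →
      (∫ x : ℝ, Complex.exp (2 * Real.pi * Complex.I * ℓ * x)
        * (starRingEnd ℂ) (Complex.exp (2 * Real.pi * Complex.I * ℓ' * x)) ∂ν) = 0 :=
    fun k ℓ h ℓ' h' hne => orthogonal_of_sub_mem ν hinv (sub_mem_Oset h h' hne)
  have hinj : Function.Injective LamSet := fun k k' h =>
    le_antisymm (le_of_LamSet_eq h) (le_of_LamSet_eq h.symm)
  exact ⟨fun k _ => LamSet_infinite k, fun k _ ℓ h ℓ' h' hne => sub_mem_Oset h h' hne,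
    fun k _ => horth k, fun k k' _ _ hne => hinj.ne hne,
    Set.infinite_of_injective_forall_mem hinj fun k => ⟨LamSet_infinite k, horth k⟩⟩
end

section
/- Let k, j ∈ ℕ with k > 1 and j ≥ k, and let ℓ = 4^j/3^k. Then ℓ − 1/3 does not belong to 𝒪 = {4^{n−1}(2m+1)/3ⁿ : n ∈ ℕ₀, m ∈ ℤ}. Consequently, for any nonzero ℓ ∈ Λ_k with k > 1, the set Λ_1 ∪ {ℓ} does not yield a mutually orthogonal family of exponentials with respect to ν_{3/4}, since e_ℓ and e_{1/3} are not orthogonal. -/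
/-!
Write `φ` for the characteristic function of `ν`. Self-similarity of `ν` gives
`φ t = cos t * φ (3 t / 4)`, hence `φ t = (∏_{i < N} cos ((3/4)^i t)) * φ ((3/4)^N t)`. As `φ` is
continuous with `φ 0 = 1`, a zero of `φ` forces `cos ((3/4)^n t) = 0` for some `n`; for
`t = 2 π s` this says `s ∈ 𝒪` (`mem_Oset_of_charFun_eq_zero`). The inner product of `e_ℓ` and
`e_{1/3}` is `φ (2 π (ℓ - 1/3))`, so it remains to see `ℓ - 1/3 ∉ 𝒪` (`sub_notMem_Oset`).

Clearing denominators, membership means `4 * 3^n * (4^j - 3^(k-1)) = 4^n * 3^k * (2m+1)`. The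
factor `4^j - 3^(k-1)` is odd, so comparing powers of two forces `n = 1`; then `3^(k-1)` divides
`4^j`, which is impossible for `k > 1`.
-/

open MeasureTheory
open scoped ENNReal

/-- The integer form of `4^(q+1)/3^(p+2) - 1/3 ∉ 𝒪`. -/
lemma int_equation_impossible (p q n : ℕ) (m : ℤ) :
    4 * 3 ^ n * ((4 : ℤ) ^ (q + 1) - 3 ^ (p + 1)) ≠ 4 ^ n * 3 ^ (p + 2) * (2 * m + 1) := by
  intro h
  have h3 : ∀ r : ℕ, Odd ((3 : ℤ) ^ r) := fun r => Odd.pow (by decide)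
  have h4 : ∀ r : ℕ, Even ((4 : ℤ) ^ (r + 1)) := fun r => by
    rw [pow_succ]; exact Even.mul_left (by decide) _
  have hodd : Odd ((4 : ℤ) ^ (q + 1) - 3 ^ (p + 1)) := (h4 q).sub_odd (h3 _)
  have hm : Odd (2 * m + 1) := ⟨m, rfl⟩
  match n with
  | 0 =>
    have hr : Odd ((4 : ℤ) ^ 0 * 3 ^ (p + 2) * (2 * m + 1)) := by
      rw [pow_zero, one_mul]; exact (h3 _).mul hm
    rw [← h, mul_assoc] at hr
    exact Int.not_odd_iff_even.2 (Even.mul_right (by decide) _) hr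
  | 1 =>
    have h' : (4 : ℤ) ^ (q + 1) = 3 * (3 ^ p * (2 * m + 2)) := by
      have : (12 : ℤ) * 4 ^ (q + 1) = 12 * (3 * (3 ^ p * (2 * m + 2))) := by
        linear_combination h
      linarith
    have hd : (3 : ℤ) ∣ 4 ^ (q + 1) := ⟨_, h'⟩
    have := Int.prime_three.dvd_of_dvd_pow hd
    omega
  | r + 2 =>
    have h' : 3 ^ (r + 2) * ((4 : ℤ) ^ (q + 1) - 3 ^ (p + 1))
        = 4 ^ (r + 1) * (3 ^ (p + 2) * (2 * m + 1)) := by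
      have : 4 * (3 ^ (r + 2) * ((4 : ℤ) ^ (q + 1) - 3 ^ (p + 1)))
        = 4 * (4 ^ (r + 1) * (3 ^ (p + 2) * (2 * m + 1))) := by
        linear_combination h
      linarith
    have ho := (h3 (r + 2)).mul hodd
    rw [h'] at ho
    exact Int.not_odd_iff_even.2 ((h4 r).mul_right _) ho

lemma sub_notMem_Oset (k j : ℕ) (hk : 1 < k) (hj : k ≤ j) :
    (4 : ℝ) ^ j / (3 : ℝ) ^ k - 1 / 3 ∉ OsetThreeFourths := by
  rintro ⟨n, m, h⟩
  obtain ⟨p, rfl⟩ : ∃ p, k = p + 2 := ⟨k - 2, by omega⟩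
  obtain ⟨q, rfl⟩ : ∃ q, j = q + 1 := ⟨j - 1, by omega⟩
  apply int_equation_impossible p q n m
  rw [div_pow] at h
  have h3 : (3 : ℝ) ^ n ≠ 0 := by positivity
  have h3' : (3 : ℝ) ^ p ≠ 0 := by positivity
  have key : 4 * 3 ^ n * ((4 : ℝ) ^ (q + 1) - 3 ^ (p + 1))
      = 4 ^ n * 3 ^ (p + 2) * (2 * m + 1) := by
    have e1 : 4 * 3 ^ n * ((4 : ℝ) ^ (q + 1) - 3 ^ (p + 1))
        = 4 * 3 ^ n * 3 ^ (p + 2) * (4 ^ (q + 1) / 3 ^ (p + 2) - 1 / 3) := by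
      field_simp
      ring
    rw [e1, h]
    field_simp
  exact_mod_cast key

/-- Self-similarity of `ν` on the Fourier side. -/
lemma charFun_self_similar (ν : Measure ℝ) [IsProbabilityMeasure ν]
    (hinv : ν = (1 / 2 : ℝ≥0∞) • Measure.map (fun x : ℝ => (3 / 4 : ℝ) * x + 1) ν
              + (1 / 2 : ℝ≥0∞) • Measure.map (fun x : ℝ => (3 / 4 : ℝ) * x - 1) ν) (t : ℝ) :
    charFun ν t = Real.cos t * charFun ν (3 / 4 * t) := by
  have hm1 : Measurable (fun x : ℝ => (3 / 4 : ℝ) * x + 1) := by fun_prop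
  have hm2 : Measurable (fun x : ℝ => (3 / 4 : ℝ) * x - 1) := by fun_prop
  have hint : ∀ (μ : Measure ℝ) [IsFiniteMeasure μ],
      Integrable (fun x : ℝ => Complex.exp (t * x * Complex.I)) μ := by
    intro μ _
    refine Integrable.of_bound (C := 1) (by fun_prop) (.of_forall fun x => ?_)
    rw [← Complex.ofReal_mul, Complex.norm_exp_ofReal_mul_I]
  have e1 : ∀ x : ℝ, Complex.exp (t * ((3 / 4 * x + 1 : ℝ) : ℂ) * Complex.I)
      = Complex.exp (t * Complex.I) * Complex.exp ((3 / 4 * t : ℝ) * x * Complex.I) := by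
    intro x; rw [← Complex.exp_add]; push_cast; ring_nf
  have e2 : ∀ x : ℝ, Complex.exp (t * ((3 / 4 * x - 1 : ℝ) : ℂ) * Complex.I)
      = Complex.exp (-t * Complex.I) * Complex.exp ((3 / 4 * t : ℝ) * x * Complex.I) := by
    intro x; rw [← Complex.exp_add]; push_cast; ring_nf
  have := Measure.isFiniteMeasure_map ν (fun x : ℝ => (3 / 4 : ℝ) * x + 1)
  have := Measure.isFiniteMeasure_map ν (fun x : ℝ => (3 / 4 : ℝ) * x - 1)
  have h := congrArg (fun μ : Measure ℝ => ∫ x : ℝ, Complex.exp (t * x * Complex.I) ∂μ) hinv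
  rw [integral_add_measure ((hint _).smul_measure (by simp)) ((hint _).smul_measure (by simp)),
    integral_smul_measure, integral_smul_measure,
    integral_map hm1.aemeasurable (by fun_prop), integral_map hm2.aemeasurable (by fun_prop)] at h
  simp only [e1, e2, integral_const_mul] at h
  rw [charFun_apply_real, charFun_apply_real, h, Complex.ofReal_cos, Complex.cos]
  simp only [one_div, ENNReal.toReal_inv, ENNReal.toReal_ofNat, Complex.real_smul]
  push_cast
  ring

lemma mem_Oset_of_charFun_eq_zero (ν : Measure ℝ) [IsProbabilityMeasure ν]
    (hinv : ν = (1 / 2 : ℝ≥0∞) • Measure.map (fun x : ℝ => (3 / 4 : ℝ) * x + 1) ν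
              + (1 / 2 : ℝ≥0∞) • Measure.map (fun x : ℝ => (3 / 4 : ℝ) * x - 1) ν)
    (s : ℝ) (h0 : charFun ν (2 * Real.pi * s) = 0) : s ∈ OsetThreeFourths := by
  by_contra hs
  have hcos : ∀ n : ℕ, Real.cos ((3 / 4) ^ n * (2 * Real.pi * s)) ≠ 0 := by
    intro n hn
    obtain ⟨m, hm⟩ := Real.cos_eq_zero_iff.1 hn
    refine hs ⟨n, m, ?_⟩
    have hpi := Real.pi_ne_zero
    have h1 : (3 / 4 : ℝ) ^ n * s = (2 * m + 1) / 4 := by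
      apply mul_left_cancel₀ (mul_ne_zero two_ne_zero hpi)
      linear_combination hm
    have h2 : (4 / 3 : ℝ) ^ n * (3 / 4) ^ n = 1 := by
      rw [← mul_pow]; norm_num
    linear_combination (-s) * h2 + (4 / 3 : ℝ) ^ n * h1
  have hz : ∀ n : ℕ, charFun ν ((3 / 4) ^ n * (2 * Real.pi * s)) = 0 := by
    intro n
    induction n with
    | zero => simpa using h0
    | succ n ih =>
      rw [charFun_self_similar ν hinv] at ih
      rw [pow_succ', mul_assoc]
      exact (mul_eq_zero.1 ih).resolve_left (by exact_mod_cast hcos n)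
  have hlim : Filter.Tendsto (fun n : ℕ => (3 / 4 : ℝ) ^ n * (2 * Real.pi * s)) Filter.atTop
      (nhds 0) := by
    simpa using (tendsto_pow_atTop_nhds_zero_of_lt_one (r := (3 / 4 : ℝ))
      (by norm_num) (by norm_num)).mul_const (2 * Real.pi * s)
  have hc : Continuous (charFun ν) := by fun_prop
  have hl := (hc.tendsto 0).comp hlim
  have h1 : charFun ν 0 = 0 :=
    tendsto_nhds_unique hl (by simp [Function.comp_def, hz])
  simp at h1

/-- Let `k > 1`, `j ≥ k`, and `ℓ = 4^j/3^k`.  Then `ℓ − 1/3 ∉ 𝒪`; consequently, for the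
Bernoulli convolution measure `ν = ν_{3/4}`, the exponentials `e_ℓ` and `e_{1/3}` are not
orthogonal, so `Λ₁ ∪ {ℓ}` is not a mutually orthogonal family of exponentials. -/
theorem lamOne_union_element_not_orthogonal
    (ν : Measure ℝ) [IsProbabilityMeasure ν]
    (hatom : ∀ x : ℝ, ν {x} = 0)
    (hinv : ν = (1 / 2 : ℝ≥0∞) • Measure.map (fun x : ℝ => (3 / 4 : ℝ) * x + 1) ν
              + (1 / 2 : ℝ≥0∞) • Measure.map (fun x : ℝ => (3 / 4 : ℝ) * x - 1) ν)
    (k j : ℕ) (hk : 1 < k) (hj : k ≤ j) :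
    ((4 : ℝ) ^ j / (3 : ℝ) ^ k - 1 / 3 ∉ OsetThreeFourths) ∧
    (∫ x : ℝ, Complex.exp (2 * Real.pi * Complex.I * ((4 : ℝ) ^ j / (3 : ℝ) ^ k) * x)
        * (starRingEnd ℂ) (Complex.exp (2 * Real.pi * Complex.I * (1 / 3 : ℝ) * x)) ∂ν) ≠ 0 := by
  have hO := sub_notMem_Oset k j hk hj
  refine ⟨hO, fun h => hO (mem_Oset_of_charFun_eq_zero ν hinv _ ?_)⟩
  rw [charFun_apply_real, ← h]
  congr 1
  ext x
  rw [← Complex.exp_conj, ← Complex.exp_add]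
  simp only [map_mul, Complex.conj_I, Complex.conj_ofReal, map_ofNat]
  push_cast
  ring_nf
end

section
/- Let Γ₁ = { (1/3) · Σ_{j=0}^{p} a_j 4^j : p ∈ ℕ, each a_j ∈ {0,1} } ∪ {0}. Then Γ₁ is maximally orthogonal for ν_{3/4}: for every x ∈ ℝ with x ∉ Γ₁, there exists γ ∈ Γ₁ such that x − γ ∉ 𝒪 = {4^{n−1}(2m+1)/3ⁿ : n ∈ ℕ₀, m ∈ ℤ}; i.e., e_x is not orthogonal to e_γ, so no exponential can be added to {e_γ : γ ∈ Γ₁} while preserving pairwise orthogonality. -/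
/-!
Write `φ` for the Fourier transform of `ν`. Self-similarity gives `φ(t) = cos(2πt) φ(3t/4)`, and
`φ` is continuous with `φ(0) = 1`, so iterating shows that `φ` vanishes only on
`OsetThreeFourths` (`fourier_ne_zero`). It remains to find `γ ∈ GamOne` with
`x - γ ∉ OsetThreeFourths`.

Suppose there is none. Elements of `OsetThreeFourths` have the form `4 ^ (n - 1) * odd / 3 ^ n`, so
comparing the conditions for `γ = 0` and `γ = 1 / 3` modulo 2 and modulo 3 forces `y = 3x` to be an
integer (`exists_int`). Then `y - g` is a power of 4 times an odd number for every `g` that is a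
sum of distinct powers of 4. Taking `g = 0, 1` shows `y ≡ 0` or `1` mod 4, and the condition passes
from `y` to `⌊y / 4⌋`; since it excludes `y = 0` and `y = -1`, descent on `|y|` gives a
contradiction (`descent`).
-/

open MeasureTheory
open scoped ENNReal

/-- The set `Γ₁ = {(1/3) Σ_{j=0}^{p} a_j 4^j : p ∈ ℕ, a_j ∈ {0,1}} ∪ {0}`. -/
def GamOne : Set ℝ :=
  {x : ℝ | ∃ p : ℕ, ∃ a : ℕ → ℕ, (∀ j, a j = 0 ∨ a j = 1) ∧
    x = (1 / 3 : ℝ) * ∑ j ∈ Finset.range (p + 1), (a j : ℝ) * (4 : ℝ) ^ j} ∪ {0}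

/-! ### Fourier transform of the self-similar measure -/

lemma charFun_selfSimilar (ν : Measure ℝ) [IsProbabilityMeasure ν]
    (hinv : ν = (1 / 2 : ℝ≥0∞) • Measure.map (fun x : ℝ => (3 / 4 : ℝ) * x + 1) ν
              + (1 / 2 : ℝ≥0∞) • Measure.map (fun x : ℝ => (3 / 4 : ℝ) * x - 1) ν) (t : ℝ) :
    charFun ν t = Complex.cos t * charFun ν (3 / 4 * t) := by
  have hexp : ∀ (μ : Measure ℝ) [IsProbabilityMeasure μ],
      Integrable (fun y : ℝ => Complex.exp (t * y * Complex.I)) μ := by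
    intro μ _
    refine Integrable.of_bound (C := 1) (by fun_prop) (Filter.Eventually.of_forall fun y => ?_)
    rw [← Complex.ofReal_mul, Complex.norm_exp_ofReal_mul_I]
  have hm1 : Measurable (fun x : ℝ => (3 / 4 : ℝ) * x + 1) := by fun_prop
  have hm2 : Measurable (fun x : ℝ => (3 / 4 : ℝ) * x - 1) := by fun_prop
  have := Measure.isProbabilityMeasure_map (μ := ν) hm1.aemeasurable
  have := Measure.isProbabilityMeasure_map (μ := ν) hm2.aemeasurable
  rw [charFun_apply_real]
  conv_lhs => rw [hinv]
  rw [integral_add_measure ((hexp _).smul_measure (by simp)) ((hexp _).smul_measure (by simp)),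
    integral_smul_measure, integral_smul_measure,
    integral_map hm1.aemeasurable (by fun_prop), integral_map hm2.aemeasurable (by fun_prop),
    charFun_apply_real]
  have e1 : ∀ y : ℝ, Complex.exp (t * ((3 / 4 * y + 1 : ℝ) : ℂ) * Complex.I)
      = Complex.exp (t * Complex.I) * Complex.exp (((3 / 4 * t : ℝ) : ℂ) * y * Complex.I) := by
    intro y
    rw [← Complex.exp_add]
    congr 1
    push_cast
    ring
  have e2 : ∀ y : ℝ, Complex.exp (t * ((3 / 4 * y - 1 : ℝ) : ℂ) * Complex.I)
      = Complex.exp (-t * Complex.I) * Complex.exp (((3 / 4 * t : ℝ) : ℂ) * y * Complex.I) := by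
    intro y
    rw [← Complex.exp_add]
    congr 1
    push_cast
    ring
  simp only [e1, e2, integral_const_mul]
  rw [Complex.cos]
  simp only [one_div, ENNReal.toReal_inv, ENNReal.toReal_ofNat, Complex.real_smul]
  push_cast
  ring

lemma fourier_ne_zero (ν : Measure ℝ) [IsProbabilityMeasure ν]
    (hinv : ν = (1 / 2 : ℝ≥0∞) • Measure.map (fun x : ℝ => (3 / 4 : ℝ) * x + 1) ν
              + (1 / 2 : ℝ≥0∞) • Measure.map (fun x : ℝ => (3 / 4 : ℝ) * x - 1) ν)
    (t : ℝ) (ht : t ∉ OsetThreeFourths) : charFun ν (2 * Real.pi * t) ≠ 0 := by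
  have hstep : ∀ n : ℕ, charFun ν (2 * Real.pi * t) = 0 →
      charFun ν ((3 / 4) ^ n * (2 * Real.pi * t)) = 0 := by
    intro n h0
    induction n with
    | zero => simpa using h0
    | succ n ih =>
      rw [charFun_selfSimilar ν hinv, mul_eq_zero] at ih
      rcases ih with h | h
      · exfalso
        rw [← Complex.ofReal_cos, Complex.ofReal_eq_zero, Real.cos_eq_zero_iff] at h
        obtain ⟨k, hk⟩ := h
        refine ht ⟨n, k, ?_⟩
        have hpi := Real.pi_ne_zero
        have h1 : (3 / 4 : ℝ) ^ n * t = (2 * k + 1) / 4 := by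
          apply mul_left_cancel₀ hpi
          linear_combination hk / 2
        have h2 : (4 / 3 : ℝ) ^ n * (3 / 4) ^ n = 1 := by
          rw [← mul_pow]
          norm_num
        linear_combination (4 / 3 : ℝ) ^ n * h1 - t * h2
      · rw [← h]
        congr 1
        ring
  intro h0
  have hlim : Filter.Tendsto (fun n : ℕ => charFun ν ((3 / 4) ^ n * (2 * Real.pi * t)))
      Filter.atTop (nhds (charFun ν 0)) := by
    refine (continuous_charFun.tendsto 0).comp ?_
    simpa using (tendsto_pow_atTop_nhds_zero_of_lt_one (r := (3 / 4 : ℝ)) (by norm_num)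
      (by norm_num)).mul_const (2 * Real.pi * t)
  simp only [hstep _ h0] at hlim
  simpa using tendsto_nhds_unique hlim tendsto_const_nhds

/-! ### Arithmetic of the spectrum -/

lemma gamOne_zero : (0 : ℝ) ∈ GamOne := Or.inr rfl

/-- Prepending a base 4 digit `d ∈ {0, 1}` stays inside `GamOne`. -/
lemma gamOne_step {g : ℝ} (hg : g ∈ GamOne) (d : ℕ) (hd : d = 0 ∨ d = 1) :
    4 * g + d / 3 ∈ GamOne := by
  rcases hg with ⟨p, a, ha, rfl⟩ | hg
  · refine Or.inl ⟨p + 1, fun j => if j = 0 then d else a (j - 1), ?_, ?_⟩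
    · intro j
      dsimp only
      split_ifs
      · exact hd
      · exact ha _
    · rw [Finset.sum_range_succ' _ (p + 1)]
      simp only [Nat.add_eq_zero_iff, one_ne_zero, and_false, if_false, Nat.add_sub_cancel,
        if_true, pow_zero, pow_succ, ← mul_assoc, ← Finset.sum_mul]
      ring
  · rw [Set.mem_singleton_iff] at hg
    refine Or.inl ⟨0, fun _ => d, fun _ => hd, ?_⟩
    simp [hg]
    ring

/-- No integer `y` differs from every sum of distinct powers of 4 by a power of 4 times an odd
number. -/
lemma descent (y : ℤ) (h : ∀ g : ℤ, (g : ℝ) / 3 ∈ GamOne →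
    ∃ (k : ℕ) (c : ℤ), y - g = 4 ^ k * (2 * c + 1)) : False := by
  have hmem0 : ((0 : ℤ) : ℝ) / 3 ∈ GamOne := by simpa using gamOne_zero
  have hmem1 : ((1 : ℤ) : ℝ) / 3 ∈ GamOne := by
    simpa using gamOne_step gamOne_zero 1 (Or.inr rfl)
  have hne : y ≠ 0 := by
    rintro rfl
    obtain ⟨k, c, hc⟩ := h 0 hmem0
    have h4 : (4 : ℤ) ^ k ≠ 0 := by positivity
    have : (4 : ℤ) ^ k * (2 * c + 1) ≠ 0 := mul_ne_zero h4 (by omega)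
    exact this (by linarith)
  -- a power of 4 times an odd number is not `2` modulo 4
  have hmod : ∀ (k : ℕ) (c z : ℤ), z = 4 ^ k * (2 * c + 1) → z % 4 ≠ 2 := by
    intro k c z hz
    cases k with
    | zero => simp at hz; omega
    | succ k =>
      rw [pow_succ] at hz
      have : z = 4 * (4 ^ k * (2 * c + 1)) := by rw [hz]; ring
      omega
  have hd : y % 4 = 0 ∨ y % 4 = 1 := by
    obtain ⟨k, c, hc⟩ := h 0 hmem0
    obtain ⟨l, e, he⟩ := h 1 hmem1
    have h1 := hmod _ _ _ hc
    have h2 := hmod _ _ _ he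
    omega
  refine descent (y / 4) fun g hg => ?_
  have hg' : ((4 * g + y % 4 : ℤ) : ℝ) / 3 ∈ GamOne := by
    rcases hd with hd | hd
    · have := gamOne_step hg 0 (Or.inl rfl)
      rw [hd]
      convert this using 1
      push_cast
      ring
    · have := gamOne_step hg 1 (Or.inr rfl)
      rw [hd]
      convert this using 1
      push_cast
      ring
  obtain ⟨k, c, hc⟩ := h _ hg'
  cases k with
  | zero => simp at hc; omega
  | succ k =>
    refine ⟨k, c, ?_⟩
    have : y - (4 * g + y % 4) = 4 * (4 ^ k * (2 * c + 1)) := by rw [hc]; ring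
    omega
termination_by y.natAbs
decreasing_by omega

/-- Three times an element of `OsetThreeFourths`, cleared of denominators; the exponent `0` and the
positive exponents are separated because of the factor `1 / 4`. -/
lemma oset_cases {z : ℝ} (hz : z ∈ OsetThreeFourths) :
    (∃ m : ℤ, 4 * (3 * z) = 3 * (2 * m + 1)) ∨
    (∃ (k : ℕ) (m : ℤ), 3 ^ k * (3 * z) = 4 ^ k * (2 * m + 1)) := by
  obtain ⟨n, m, rfl⟩ := hz
  cases n with
  | zero => exact Or.inl ⟨m, by ring⟩
  | succ k =>
    refine Or.inr ⟨k, m, ?_⟩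
    rw [pow_succ, div_pow]
    field_simp

lemma odd_three_pow (k : ℕ) : Odd ((3 : ℤ) ^ k) := Odd.pow (by decide)

/-- If both `x` and `x - 1 / 3` lie in `OsetThreeFourths`, then `3 * x` is an integer. -/
lemma exists_int {x : ℝ} (h0 : x ∈ OsetThreeFourths) (h1 : x - 1 / 3 ∈ OsetThreeFourths) :
    ∃ y : ℤ, x = y / 3 := by
  rcases oset_cases h0 with ⟨m, hm⟩ | ⟨k, m, hm⟩ <;>
    rcases oset_cases h1 with ⟨l, hl⟩ | ⟨j, l, hl⟩
  · have : (3 * (2 * m + 1) - 4 : ℤ) = 3 * (2 * l + 1) := by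
      have : (3 * (2 * m + 1) - 4 : ℝ) = 3 * (2 * l + 1) := by linarith
      exact_mod_cast this
    omega
  · have : (3 ^ j * (3 * (2 * m + 1) - 4) : ℤ) = 4 * (4 ^ j * (2 * l + 1)) := by
      have : (3 ^ j * (3 * (2 * m + 1) - 4) : ℝ) = 4 * (4 ^ j * (2 * l + 1)) := by
        linear_combination 4 * hl - 3 ^ j * hm
      exact_mod_cast this
    have ho : Odd (3 ^ j * (3 * (2 * m + 1) - 4) : ℤ) :=
      (odd_three_pow j).mul ⟨3 * m - 1, by ring⟩
    rw [this] at ho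
    obtain ⟨r, hr⟩ := ho
    omega
  · have : (3 ^ k * (3 * (2 * l + 1) + 4) : ℤ) = 4 * (4 ^ k * (2 * m + 1)) := by
      have : (3 ^ k * (3 * (2 * l + 1) + 4) : ℝ) = 4 * (4 ^ k * (2 * m + 1)) := by
        linear_combination 4 * hm - 3 ^ k * hl
      exact_mod_cast this
    have ho : Odd (3 ^ k * (3 * (2 * l + 1) + 4) : ℤ) :=
      (odd_three_pow k).mul ⟨3 * l + 3, by ring⟩
    rw [this] at ho
    obtain ⟨r, hr⟩ := ho
    omega
  · cases k with
    | zero => exact ⟨2 * m + 1, by push_cast; linarith⟩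
    | succ k =>
      cases j with
      | zero => exact ⟨2 * l + 2, by push_cast; linarith⟩
      | succ j =>
        -- `3 * x` and `3 * x - 1` cannot both be even in the localization of `ℤ` at 2
        exfalso
        have : (3 ^ (k + 1) * 3 ^ (j + 1) : ℤ) =
            4 * (4 ^ k * (2 * m + 1) * 3 ^ (j + 1) - 4 ^ j * (2 * l + 1) * 3 ^ (k + 1)) := by
          have : (3 ^ (k + 1) * 3 ^ (j + 1) : ℝ) =
              4 * (4 ^ k * (2 * m + 1) * 3 ^ (j + 1) - 4 ^ j * (2 * l + 1) * 3 ^ (k + 1)) := by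
            linear_combination 3 ^ (j + 1) * hm - 3 ^ (k + 1) * hl
          exact_mod_cast this
        have ho := (odd_three_pow (k + 1)).mul (odd_three_pow (j + 1))
        rw [this] at ho
        obtain ⟨r, hr⟩ := ho
        omega

lemma exists_not_mem_oset (x : ℝ) : ∃ γ ∈ GamOne, x - γ ∉ OsetThreeFourths := by
  by_contra! hcon
  obtain ⟨y, rfl⟩ := exists_int (by simpa using hcon 0 gamOne_zero)
    (hcon _ (by simpa using gamOne_step gamOne_zero 1 (Or.inr rfl)))
  refine descent y fun g hg => ?_
  rcases oset_cases (hcon _ hg) with ⟨m, hm⟩ | ⟨k, m, hm⟩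
  · have : (4 * (y - g) : ℤ) = 3 * (2 * m + 1) := by
      have : (4 * (y - g) : ℝ) = 3 * (2 * m + 1) := by linarith
      exact_mod_cast this
    omega
  · have hz : (3 ^ k * (y - g) : ℤ) = 4 ^ k * (2 * m + 1) := by
      have : (3 ^ k * (y - g) : ℝ) = 4 ^ k * (2 * m + 1) := by linear_combination hm
      exact_mod_cast this
    have hcop : IsCoprime ((4 : ℤ) ^ k) (3 ^ k) := IsCoprime.pow ⟨1, -1, by norm_num⟩
    obtain ⟨c, hc⟩ : (4 : ℤ) ^ k ∣ y - g := hcop.dvd_of_dvd_mul_left ⟨_, hz⟩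
    have hc' : 3 ^ k * c = 2 * m + 1 := by
      apply mul_left_cancel₀ (pow_ne_zero k (four_ne_zero (α := ℤ)))
      rw [← hz, hc]
      ring
    obtain ⟨r, hr⟩ : Odd c := (Int.odd_mul.1 (hc' ▸ ⟨m, rfl⟩ : Odd (3 ^ k * c))).2
    exact ⟨k, r, by rw [hc, hr]⟩

/-- `Γ₁` is maximally orthogonal for `ν_{3/4}`: for every `x ∉ Γ₁` there is `γ ∈ Γ₁`
with `x − γ ∉ 𝒪`, i.e. `e_x` is not orthogonal to `e_γ`, so no exponential can be added
to `{e_γ : γ ∈ Γ₁}` while preserving pairwise orthogonality. -/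
theorem gamOne_maximally_orthogonal
    (ν : Measure ℝ) [IsProbabilityMeasure ν]
    (hatom : ∀ x : ℝ, ν {x} = 0)
    (hinv : ν = (1 / 2 : ℝ≥0∞) • Measure.map (fun x : ℝ => (3 / 4 : ℝ) * x + 1) ν
              + (1 / 2 : ℝ≥0∞) • Measure.map (fun x : ℝ => (3 / 4 : ℝ) * x - 1) ν)
    (x : ℝ) (hx : x ∉ GamOne) :
    ∃ γ ∈ GamOne, x - γ ∉ OsetThreeFourths ∧
      (∫ y : ℝ, Complex.exp (2 * Real.pi * Complex.I * x * y)
        * (starRingEnd ℂ) (Complex.exp (2 * Real.pi * Complex.I * γ * y)) ∂ν) ≠ 0 := by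
  obtain ⟨γ, hγ, hO⟩ := exists_not_mem_oset x
  refine ⟨γ, hγ, hO, ?_⟩
  have h := fourier_ne_zero ν hinv (x - γ) hO
  rw [charFun_apply_real] at h
  convert h using 3 with y
  rw [← Complex.exp_conj, ← Complex.exp_add]
  congr 1
  simp only [map_mul, Complex.conj_ofReal, Complex.conj_I, map_ofNat]
  push_cast
  ring
end

section
/- Let a, b be coprime positive integers with a < b and b odd. Then every set Γ ⊆ ℝ with the property that γ − γ' ∈ 𝒪_{a,b} for all distinct γ, γ' ∈ Γ is a finite set. Consequently, for λ = a/b with b odd, every collection of pairwise orthogonal exponential functions in L²(X_λ, ν_λ) is finite. -/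
/-!
With `λ = a/b`, the argument has an arithmetic and an analytic part.

Arithmetic. Write `4(γ - γ') = (b/a)ⁿ · odd` for distinct `γ, γ' ∈ Γ`.
If `a` is odd, all these differences have 2-adic valuation `0`, and two of them cannot add up to a
third one, so `Γ` has at most two elements.
If `a` is even, fix `γ₀ ≠ γ₁` in `Γ` with exponent `m` and odd factor `u`. For a further
`γ ∈ Γ` whose exponent `n` against `γ₀` exceeds `m`, parity forces the exponent against `γ₁` to be
`n` as well, hence `b ^ (n - m) ∣ u` and `n ≤ m + |u|` (`exponent_le`). So all the numbers
`4 a ^ M (γ - γ₀)` are integers for a fixed `M`, and they are pairwise incongruent modulo `2 a ^ M`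
(`finite_of_scaled_integers`), which leaves finitely many.

Analysis. The inner product of two exponentials is the characteristic function of `ν` at
`2π(γ - γ')`. Invariance gives `ν̂(t) = cos t · ν̂(λ t)`, and `ν̂(λᴺ t) → 1`, so a zero of `ν̂` comes
from a zero of some `cos (λᵏ t)`; this places `γ - γ'` in `𝒪_{a,b}`.
-/

open MeasureTheory
open scoped ENNReal

/-- The set `𝒪_{a,b} = {(1/4)(b/a)ⁿ(2k+1) : n ∈ ℕ₀, k ∈ ℤ}`. -/
def OsetAB (a b : ℕ) : Set ℝ :=
  {x : ℝ | ∃ (n : ℕ) (k : ℤ), x = (1 / 4) * ((b : ℝ) / (a : ℝ)) ^ n * (2 * (k : ℝ) + 1)}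

/-- Membership in `𝒪_{a,b}` with denominators cleared. -/
lemma OsetAB_clear {a b : ℕ} (ha : 0 < a) {x : ℝ} (hx : x ∈ OsetAB a b) :
    ∃ (n : ℕ) (u : ℤ), Odd u ∧ (a : ℝ) ^ n * (4 * x) = (b : ℝ) ^ n * u := by
  obtain ⟨n, k, rfl⟩ := hx
  refine ⟨n, 2 * k + 1, ⟨k, rfl⟩, ?_⟩
  have : (a : ℝ) ≠ 0 := by positivity
  push_cast
  rw [div_pow]
  field_simp

/-- If the numbers `4 a ^ M (γ - γ₀)` are all integers, they are pairwise incongruent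
modulo `2 a ^ M`, since `4 aⁿ (γ - γ')` is odd for some `n`. -/
lemma finite_of_scaled_integers {a b : ℕ} (ha : 0 < a) (hb : Odd b) {Γ : Set ℝ}
    (hΓ : ∀ γ ∈ Γ, ∀ γ' ∈ Γ, γ ≠ γ' → γ - γ' ∈ OsetAB a b) (γ₀ : ℝ) (M : ℕ)
    (hM : ∀ γ ∈ Γ, ∃ z : ℤ, (a : ℝ) ^ M * (4 * (γ - γ₀)) = z) : Γ.Finite := by
  choose! f hf using hM
  have hne : NeZero (2 * a ^ M) := ⟨by positivity⟩
  refine Set.Finite.of_injOn (f := fun γ => (f γ : ZMod (2 * a ^ M))) (t := Set.univ)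
    (fun _ _ => Set.mem_univ _) ?_ Set.finite_univ
  intro γ hγ γ' hγ' h
  by_contra hne
  obtain ⟨n, u, hu, hx⟩ := OsetAB_clear ha (hΓ γ hγ γ' hγ' hne)
  have h1 := (ZMod.intCast_eq_intCast_iff_dvd_sub _ _ _).1 h.symm
  obtain ⟨c, hc⟩ := h1
  have hcR : (f γ : ℝ) - f γ' = 2 * (a : ℝ) ^ M * c := by exact_mod_cast hc
  rw [← hf γ hγ, ← hf γ' hγ'] at hcR
  have ha0 : (a : ℝ) ^ M ≠ 0 := by positivity
  have h4 : 4 * (γ - γ') = 2 * (c : ℝ) := by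
    apply mul_left_cancel₀ ha0
    linear_combination hcR
  rw [h4] at hx
  have hz : (a : ℤ) ^ n * (2 * c) = (b : ℤ) ^ n * u := by exact_mod_cast hx
  have hodd : Odd ((b : ℤ) ^ n * u) := ((Int.odd_coe_nat b).2 hb).pow.mul hu
  rw [← hz, ← Int.not_even_iff_odd] at hodd
  exact hodd (((even_two_mul c)).mul_left _)

/-- For odd `a`, sums of two elements `(b/a)ⁿ · odd` are never of this form. -/
lemma no_triangle_of_odd {a b : ℕ} (haodd : Odd a) (hb : Odd b) {m n l : ℕ} {u v w : ℤ} {x y : ℝ}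
    (hu : Odd u) (hv : Odd v) (hw : Odd w)
    (hx : (a : ℝ) ^ m * x = (b : ℝ) ^ m * u) (hy : (a : ℝ) ^ l * y = (b : ℝ) ^ l * w)
    (hxy : (a : ℝ) ^ n * (x + y) = (b : ℝ) ^ n * v) : False := by
  have h : (a : ℝ) ^ n * a ^ l * (b ^ m * u) + (a : ℝ) ^ n * a ^ m * (b ^ l * w)
      = (a : ℝ) ^ m * a ^ l * (b ^ n * v) := by
    rw [← hx, ← hy, ← hxy]; ring
  have hz : (a : ℤ) ^ n * a ^ l * (b ^ m * u) + (a : ℤ) ^ n * a ^ m * (b ^ l * w)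
      = (a : ℤ) ^ m * a ^ l * (b ^ n * v) := by exact_mod_cast h
  have hA : ∀ k, Odd ((a : ℤ) ^ k) := fun k => ((Int.odd_coe_nat a).2 haodd).pow
  have hB : ∀ k, Odd ((b : ℤ) ^ k) := fun k => ((Int.odd_coe_nat b).2 hb).pow
  have h1 : Odd ((a : ℤ) ^ m * a ^ l * (b ^ n * v)) :=
    ((hA _).mul (hA _)).mul ((hB _).mul hv)
  rw [← hz, ← Int.not_even_iff_odd] at h1
  exact h1 ((((hA _).mul (hA _)).mul ((hB _).mul hu)).add_odd
    (((hA _).mul (hA _)).mul ((hB _).mul hw)))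

/-- For even `a`, the exponent of `x + y` is bounded in terms of the data of `x` alone. If it exceeds
`m`, then parity makes it equal to the exponent of `y`, and `b ^ (n - m)` divides `u`. -/
lemma exponent_le {a b : ℕ} (ha : 0 < a) (hab : a < b) (hco : Nat.Coprime a b) (haeven : Even a)
    (hb : Odd b) {m n l : ℕ} {u v w : ℤ} {x y : ℝ}
    (hu : Odd u) (hv : Odd v) (hw : Odd w)
    (hx : (a : ℝ) ^ m * x = (b : ℝ) ^ m * u) (hy : (a : ℝ) ^ l * y = (b : ℝ) ^ l * w)
    (hxy : (a : ℝ) ^ n * (x + y) = (b : ℝ) ^ n * v) : n ≤ m + u.natAbs := by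
  have hB : ∀ k, Odd ((b : ℤ) ^ k) := fun k => ((Int.odd_coe_nat b).2 hb).pow
  have hA : ∀ k, Even ((a : ℤ) ^ (k + 1)) := fun k =>
    ((Int.even_coe_nat a).2 haeven).pow_of_ne_zero (Nat.succ_ne_zero k)
  by_contra hlt
  push Not at hlt
  obtain ⟨d, rfl⟩ : ∃ d, n = m + (d + 1) := ⟨n - m - 1, by omega⟩
  rcases lt_trichotomy l (m + (d + 1)) with hl | hl | hl
  · obtain ⟨e, he⟩ : ∃ e, m + (d + 1) = l + (e + 1) := ⟨m + d - l, by omega⟩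
    have h : (a : ℝ) ^ (d + 1) * (b ^ m * u) + (a : ℝ) ^ (e + 1) * (b ^ l * w)
        = b ^ (m + (d + 1)) * v := by
      rw [← hx, ← hy, ← hxy, mul_add, ← mul_assoc, ← mul_assoc, ← pow_add, ← pow_add,
        add_comm (e + 1) l, ← he, add_comm (d + 1) m]
    have hz : (a : ℤ) ^ (d + 1) * (b ^ m * u) + (a : ℤ) ^ (e + 1) * (b ^ l * w)
        = b ^ (m + (d + 1)) * v := by exact_mod_cast h
    have h1 := (hB (m + (d + 1))).mul hv
    rw [← hz, ← Int.not_even_iff_odd] at h1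
    exact h1 (((hA _).mul_right _).add ((hA _).mul_right _))
  · subst hl
    have h : (a : ℝ) ^ (d + 1) * (b ^ m * u) = b ^ m * (b ^ (d + 1) * (v - w)) := by
      have : (b : ℝ) ^ m * (b ^ (d + 1) * (v - w))
          = b ^ (m + (d + 1)) * v - b ^ (m + (d + 1)) * w := by ring
      rw [this, ← hx, ← hy, ← hxy]; ring
    have hb0 : (b : ℤ) ^ m ≠ 0 := by
      have : 0 < b := by omega
      positivity
    have hz : (a : ℤ) ^ (d + 1) * (b ^ m * u) = b ^ m * (b ^ (d + 1) * (v - w)) := by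
      exact_mod_cast h
    have hz' : (a : ℤ) ^ (d + 1) * u = b ^ (d + 1) * (v - w) := by
      apply mul_left_cancel₀ hb0
      linear_combination hz
    have hdvd : (b : ℤ) ^ (d + 1) ∣ u := by
      have hc : IsCoprime ((b : ℤ) ^ (d + 1)) ((a : ℤ) ^ (d + 1)) :=
        (Nat.isCoprime_iff_coprime.2 hco.symm).pow
      exact hc.dvd_of_dvd_mul_left ⟨_, hz'⟩
    have hu0 : 0 < u.natAbs := by
      rcases hu with ⟨k, hk⟩; omega
    have h2 : b ^ (d + 1) ≤ u.natAbs := by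
      apply Nat.le_of_dvd hu0
      have := Int.natAbs_dvd_natAbs.2 hdvd
      simpa [Int.natAbs_pow] using this
    have h3 : d + 1 < b ^ (d + 1) := Nat.lt_pow_self (by omega)
    omega
  · obtain ⟨e, he⟩ : ∃ e, l = m + (d + 1) + (e + 1) := ⟨l - (m + (d + 1)) - 1, by omega⟩
    have h : (a : ℝ) ^ (e + 1) * (b ^ (m + (d + 1)) * v)
        - (a : ℝ) ^ (d + 1 + e + 1) * (b ^ m * u) = b ^ l * w := by
      rw [← hx, ← hy, ← hxy, he]; ring
    have hz : (a : ℤ) ^ (e + 1) * (b ^ (m + (d + 1)) * v)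
        - (a : ℤ) ^ (d + 1 + e + 1) * (b ^ m * u) = b ^ l * w := by exact_mod_cast h
    have h1 := (hB l).mul hw
    rw [← hz, ← Int.not_even_iff_odd] at h1
    exact h1 (((hA _).mul_right _).sub ((hA _).mul_right _))

lemma finite_of_sub_mem_OsetAB {a b : ℕ} (ha : 0 < a) (hab : a < b) (hco : Nat.Coprime a b)
    (hb : Odd b) {Γ : Set ℝ}
    (hΓ : ∀ γ ∈ Γ, ∀ γ' ∈ Γ, γ ≠ γ' → γ - γ' ∈ OsetAB a b) : Γ.Finite := by
  rcases Γ.subsingleton_or_nontrivial with hs | ⟨γ₀, h₀, γ₁, h₁, h01⟩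
  · exact hs.finite
  obtain ⟨m, u, hu, hx⟩ := OsetAB_clear ha (hΓ γ₁ h₁ γ₀ h₀ h01.symm)
  rcases Nat.even_or_odd a with haeven | haodd
  · refine finite_of_scaled_integers ha hb hΓ γ₀ (m + u.natAbs) fun γ hγ => ?_
    -- If the exponent `n` of `γ - γ₀` is at most `M`, then `a ^ M` clears its denominator.
    have key : ∀ (n : ℕ) (v : ℤ), (a : ℝ) ^ n * (4 * (γ - γ₀)) = (b : ℝ) ^ n * v →
        n ≤ m + u.natAbs → ∃ z : ℤ, (a : ℝ) ^ (m + u.natAbs) * (4 * (γ - γ₀)) = z := by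
      intro n v hv hn
      obtain ⟨c, hc⟩ := Nat.exists_eq_add_of_le hn
      refine ⟨a ^ c * (b ^ n * v), ?_⟩
      push_cast
      rw [hc, ← hv]; ring
    by_cases hγ0 : γ = γ₀
    · exact ⟨0, by simp [hγ0]⟩
    by_cases hγ1 : γ = γ₁
    · subst hγ1
      exact key m u hx (by omega)
    obtain ⟨n, v, hv, hxy⟩ := OsetAB_clear ha (hΓ γ hγ γ₀ h₀ hγ0)
    obtain ⟨l, w, hw, hy⟩ := OsetAB_clear ha (hΓ γ hγ γ₁ h₁ hγ1)
    refine key n v hxy (exponent_le ha hab hco haeven hb hu hv hw hx hy ?_)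
    rw [← hxy]; ring
  · refine (Set.toFinite {γ₀, γ₁}).subset fun γ hγ => ?_
    by_contra hmem
    simp only [Set.mem_insert_iff, Set.mem_singleton_iff, not_or] at hmem
    obtain ⟨n, v, hv, hxy⟩ := OsetAB_clear ha (hΓ γ hγ γ₀ h₀ hmem.1)
    obtain ⟨l, w, hw, hy⟩ := OsetAB_clear ha (hΓ γ hγ γ₁ h₁ hmem.2)
    refine no_triangle_of_odd (n := n) haodd hb hu hv hw hx hy ?_
    rw [← hxy]; ring

/-- Invariance of `ν` under `x ↦ r x ± 1` in terms of characteristic functions. -/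
lemma charFun_eq_cos_mul (r : ℝ) (ν : Measure ℝ) [IsProbabilityMeasure ν]
    (hinv : ν = (1 / 2 : ℝ≥0∞) • Measure.map (fun x : ℝ => r * x + 1) ν
              + (1 / 2 : ℝ≥0∞) • Measure.map (fun x : ℝ => r * x - 1) ν) (t : ℝ) :
    charFun ν t = Complex.cos t * charFun ν (r * t) := by
  have hcont : Continuous fun x : ℝ => Complex.exp (t * x * Complex.I) := by fun_prop
  have hint : ∀ μ : Measure ℝ, IsFiniteMeasure μ →
      Integrable (fun x : ℝ => Complex.exp (t * x * Complex.I)) μ := by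
    intro μ _
    refine (integrable_const (1 : ℝ)).mono' hcont.aestronglyMeasurable (.of_forall fun x => ?_)
    rw [← Complex.ofReal_mul, Complex.norm_exp_ofReal_mul_I]
  have hfin : ∀ μ : Measure ℝ, IsFiniteMeasure μ → IsFiniteMeasure ((1 / 2 : ℝ≥0∞) • μ) :=
    fun μ _ => Measure.smul_finite μ (by simp)
  have hp : ∀ c : ℝ, ∫ x, Complex.exp (t * (x : ℝ) * Complex.I) ∂(Measure.map (fun x => r * x + c) ν)
      = Complex.exp (t * c * Complex.I) * charFun ν (r * t) := by
    intro c
    rw [integral_map (by fun_prop) hcont.aestronglyMeasurable, charFun_apply_real,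
      ← integral_const_mul]
    congr 1
    ext x
    rw [← Complex.exp_add]
    congr 1
    push_cast
    ring
  have hm := hp (-1)
  simp only [← sub_eq_add_neg] at hm
  conv_lhs => rw [charFun_apply_real, hinv]
  rw [integral_add_measure (hint _ (hfin _ inferInstance)) (hint _ (hfin _ inferInstance)),
    integral_smul_measure, integral_smul_measure, hp 1, hm, Complex.cos]
  simp
  ring

/-- A zero of the characteristic function is a zero of one of the cosine factors, because
`ν̂(rᴺ t) → ν̂(0) = 1`. -/
lemma exists_cos_eq_zero (r : ℝ) (hr0 : 0 ≤ r) (hr : r < 1) (ν : Measure ℝ)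
    [IsProbabilityMeasure ν]
    (hinv : ν = (1 / 2 : ℝ≥0∞) • Measure.map (fun x : ℝ => r * x + 1) ν
              + (1 / 2 : ℝ≥0∞) • Measure.map (fun x : ℝ => r * x - 1) ν) (t : ℝ)
    (ht : charFun ν t = 0) : ∃ n : ℕ, Real.cos (r ^ n * t) = 0 := by
  by_contra! hcos
  have hzero : ∀ n : ℕ, charFun ν (r ^ n * t) = 0 := by
    intro n
    induction n with
    | zero => simpa using ht
    | succ n ih =>
      rw [charFun_eq_cos_mul r ν hinv] at ih
      have h : Complex.cos ((r ^ n * t : ℝ) : ℂ) ≠ 0 := by exact_mod_cast hcos n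
      have := (mul_eq_zero.1 ih).resolve_left h
      rwa [← mul_assoc, ← pow_succ'] at this
  have hlim : Filter.Tendsto (fun n : ℕ => charFun ν (r ^ n * t)) Filter.atTop
      (nhds (charFun ν 0)) := by
    have h0 : Filter.Tendsto (fun n : ℕ => r ^ n * t) Filter.atTop (nhds 0) := by
      simpa using (tendsto_pow_atTop_nhds_zero_of_lt_one hr0 hr).mul_const t
    exact (continuous_charFun.tendsto 0).comp h0
  simp only [hzero] at hlim
  have := tendsto_nhds_unique hlim tendsto_const_nhds
  simp at this

lemma sub_mem_OsetAB_of_orthogonal {a b : ℕ} (ha : 0 < a) (hab : a < b)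
    (ν : Measure ℝ) [IsProbabilityMeasure ν]
    (hinv : ν = (1 / 2 : ℝ≥0∞) • Measure.map (fun x : ℝ => ((a : ℝ) / (b : ℝ)) * x + 1) ν
              + (1 / 2 : ℝ≥0∞) • Measure.map (fun x : ℝ => ((a : ℝ) / (b : ℝ)) * x - 1) ν)
    (γ γ' : ℝ) (h : (∫ x : ℝ, Complex.exp (2 * Real.pi * Complex.I * γ * x)
        * (starRingEnd ℂ) (Complex.exp (2 * Real.pi * Complex.I * γ' * x)) ∂ν) = 0) :
    γ - γ' ∈ OsetAB a b := by
  have hchar : charFun ν (2 * Real.pi * (γ - γ')) = 0 := by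
    rw [← h, charFun_apply_real]
    congr 1
    ext x
    rw [← Complex.exp_conj, ← Complex.exp_add]
    congr 1
    have h2 : (starRingEnd ℂ) 2 = 2 := Complex.conj_ofNat 2
    simp [h2]
    ring
  have ha' : (0 : ℝ) < a := by exact_mod_cast ha
  have hb' : (0 : ℝ) < b := by exact_mod_cast (ha.trans hab)
  obtain ⟨n, hn⟩ := exists_cos_eq_zero _ (by positivity)
    ((div_lt_one hb').2 (by exact_mod_cast hab)) ν hinv _ hchar
  obtain ⟨k, hk⟩ := Real.cos_eq_zero_iff.1 hn
  refine ⟨n, k, ?_⟩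
  have hpi := Real.pi_pos.ne'
  rw [div_pow] at hk ⊢
  field_simp at hk ⊢
  linear_combination hk

/-- Let `a, b` be coprime positive integers with `a < b` and `b` odd.  Every set
`Γ ⊆ ℝ` whose pairwise differences of distinct elements lie in `𝒪_{a,b}` is finite;
consequently, for `λ = a/b` with `b` odd, every collection of pairwise orthogonal
exponentials in `L²(X_λ, ν_λ)` is finite. -/
theorem odd_denominator_orthogonal_collections_finite
    (a b : ℕ) (ha : 0 < a) (hab : a < b) (hco : Nat.Coprime a b) (hb : Odd b)
    (ν : Measure ℝ) [IsProbabilityMeasure ν]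
    (hatom : ∀ x : ℝ, ν {x} = 0)
    (hinv : ν = (1 / 2 : ℝ≥0∞) • Measure.map (fun x : ℝ => ((a : ℝ) / (b : ℝ)) * x + 1) ν
              + (1 / 2 : ℝ≥0∞) • Measure.map (fun x : ℝ => ((a : ℝ) / (b : ℝ)) * x - 1) ν) :
    (∀ Γ : Set ℝ, (∀ γ ∈ Γ, ∀ γ' ∈ Γ, γ ≠ γ' → γ - γ' ∈ OsetAB a b) → Γ.Finite) ∧
    (∀ Γ : Set ℝ, (∀ γ ∈ Γ, ∀ γ' ∈ Γ, γ ≠ γ' →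
      (∫ x : ℝ, Complex.exp (2 * Real.pi * Complex.I * γ * x)
        * (starRingEnd ℂ) (Complex.exp (2 * Real.pi * Complex.I * γ' * x)) ∂ν) = 0) →
      Γ.Finite) := by
  have hfin : ∀ Γ : Set ℝ, (∀ γ ∈ Γ, ∀ γ' ∈ Γ, γ ≠ γ' → γ - γ' ∈ OsetAB a b) → Γ.Finite :=
    fun _ => finite_of_sub_mem_OsetAB ha hab hco hb
  exact ⟨hfin, fun Γ hΓ => hfin Γ fun γ hγ γ' hγ' hne =>
    sub_mem_OsetAB_of_orthogonal ha hab ν hinv γ γ' (hΓ γ hγ γ' hγ' hne)⟩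
end

section
/- Let a, b be coprime positive integers with a < b and b even. Then the set Γ = {0} ∪ { b^i/(4a) : i ∈ ℕ, i ≥ 1 } is an infinite set of real numbers such that γ − γ' ∈ 𝒪_{a,b} for all distinct γ, γ' ∈ Γ. Consequently, for λ = a/b with b even, there exists a countably infinite collection of mutually orthogonal exponentials in L²(X_λ, ν_λ). -/
/-!
The invariance of `ν` turns into the functional equation `F t = cos (2πt) * F (λt)` for its Fourier
transform `F t = ∫ exp (2πitx) dν x` (`fourier_functional_equation`). The cosine vanishes at odd
multiples of `1/4`, and `λ = a/b` lowers the exponent `n` in `(1/4)(b/a)ⁿ(2k+1)` by one, so `F`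
vanishes on `𝒪_{a,b}` by induction on `n` (`fourier_eq_zero_of_mem_OsetAB`); no limit or infinite
product is needed.

Membership of differences is arithmetic: `b^i/(4a) = (1/4)(b/a)^i a^(i-1)` with `a` odd (it is
coprime to the even `b`), and `(b^i - b^j)/(4a) = (1/4)(b/a)^j a^(j-1) (b^(i-j) - 1)` for `j < i`,
whose last two factors are odd.
-/

open MeasureTheory
open scoped ENNReal

lemma sub_mem_OsetAB_symm {a b : ℕ} {x y : ℝ} (h : x - y ∈ OsetAB a b) : y - x ∈ OsetAB a b := by
  obtain ⟨n, k, hk⟩ := h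
  refine ⟨n, -k - 1, ?_⟩
  push_cast
  linear_combination -hk

lemma pow_div_mul_odd_mem_OsetAB {a : ℕ} (b : ℕ) (ha : 0 < a) (hodd : Odd a) (i : ℕ) {m : ℤ}
    (hm : Odd m) : (b : ℝ) ^ (i + 1) / (4 * (a : ℝ)) * m ∈ OsetAB a b := by
  have ho : Odd ((a : ℤ) ^ i * m) := (((Int.odd_coe_nat a).2 hodd).pow).mul hm
  obtain ⟨k, hk⟩ := ho
  have hk' : (a : ℝ) ^ i * m = 2 * k + 1 := by exact_mod_cast hk
  have ha' : (a : ℝ) ≠ 0 := by positivity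
  refine ⟨i + 1, k, ?_⟩
  rw [← hk', div_pow]
  field_simp
  ring

lemma pow_sub_pow_mem_OsetAB {a b : ℕ} (ha : 0 < a) (hodd : Odd a) (hb : Even b) {i j : ℕ}
    (hij : i < j) :
    (b : ℝ) ^ (j + 1) / (4 * (a : ℝ)) - (b : ℝ) ^ (i + 1) / (4 * (a : ℝ)) ∈ OsetAB a b := by
  obtain ⟨d, rfl⟩ := Nat.exists_eq_add_of_lt hij
  have hm : Odd ((b : ℤ) ^ (d + 1) - 1) :=
    ((((Int.even_coe_nat b).2 hb).pow_of_ne_zero (Nat.succ_ne_zero d))).sub_odd odd_one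
  convert pow_div_mul_odd_mem_OsetAB b ha hodd i hm using 1
  push_cast
  ring

lemma integrable_exp_two_pi (ν : Measure ℝ) [IsFiniteMeasure ν] (t : ℝ) :
    Integrable (fun x : ℝ => Complex.exp (2 * Real.pi * Complex.I * t * x)) ν := by
  refine Integrable.of_bound (C := 1) (by fun_prop) (Filter.Eventually.of_forall fun x => ?_)
  rw [show (2 * Real.pi * Complex.I * t * x : ℂ) = ((2 * Real.pi * t * x : ℝ) : ℂ) * Complex.I by
    push_cast; ring, Complex.norm_exp_ofReal_mul_I]

/-- Integrating `exp (2πitx)` against the invariance equation: the translations by `±1` contribute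
the average `(exp (2πit) + exp (-2πit)) / 2 = cos (2πt)`. -/
lemma fourier_functional_equation (c : ℝ) (ν : Measure ℝ) [IsProbabilityMeasure ν]
    (hinv : ν = (1 / 2 : ℝ≥0∞) • Measure.map (fun x : ℝ => c * x + 1) ν
              + (1 / 2 : ℝ≥0∞) • Measure.map (fun x : ℝ => c * x - 1) ν) (t : ℝ) :
    ∫ x : ℝ, Complex.exp (2 * Real.pi * Complex.I * t * x) ∂ν
      = Complex.cos (2 * Real.pi * t)
        * ∫ x : ℝ, Complex.exp (2 * Real.pi * Complex.I * ((c * t : ℝ) : ℂ) * x) ∂ν := by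
  have hp : Measurable (fun x : ℝ => c * x + 1) := by fun_prop
  have hm : Measurable (fun x : ℝ => c * x - 1) := by fun_prop
  have hhalf : (1 / 2 : ℝ≥0∞) ≠ ⊤ := by simp
  have : IsProbabilityMeasure (Measure.map (fun x : ℝ => c * x + 1) ν) :=
    Measure.isProbabilityMeasure_map hp.aemeasurable
  have : IsProbabilityMeasure (Measure.map (fun x : ℝ => c * x - 1) ν) :=
    Measure.isProbabilityMeasure_map hm.aemeasurable
  conv_lhs => rw [hinv]
  rw [integral_add_measure ((integrable_exp_two_pi _ t).smul_measure hhalf)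
      ((integrable_exp_two_pi _ t).smul_measure hhalf),
    integral_smul_measure, integral_smul_measure,
    integral_map hp.aemeasurable (by fun_prop), integral_map hm.aemeasurable (by fun_prop)]
  have e1 : ∀ x : ℝ, Complex.exp (2 * Real.pi * Complex.I * t * ((c * x + 1 : ℝ) : ℂ))
      = Complex.exp (2 * Real.pi * t * Complex.I)
        * Complex.exp (2 * Real.pi * Complex.I * ((c * t : ℝ) : ℂ) * x) := by
    intro x
    rw [← Complex.exp_add]
    push_cast
    ring_nf
  have e2 : ∀ x : ℝ, Complex.exp (2 * Real.pi * Complex.I * t * ((c * x - 1 : ℝ) : ℂ))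
      = Complex.exp (-(2 * Real.pi * t) * Complex.I)
        * Complex.exp (2 * Real.pi * Complex.I * ((c * t : ℝ) : ℂ) * x) := by
    intro x
    rw [← Complex.exp_add]
    push_cast
    ring_nf
  simp_rw [e1, e2]
  rw [integral_const_mul, integral_const_mul, Complex.cos]
  simp only [one_div, ENNReal.toReal_inv, ENNReal.toReal_ofNat, Complex.real_smul]
  push_cast
  ring

/-- The Fourier transform of an invariant measure vanishes on `𝒪_{a,b}`. -/
lemma fourier_eq_zero_of_mem_OsetAB {a b : ℕ} (ha : 0 < a) (hb : 0 < b)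
    (ν : Measure ℝ) [IsProbabilityMeasure ν]
    (hinv : ν = (1 / 2 : ℝ≥0∞) • Measure.map (fun x : ℝ => ((a : ℝ) / (b : ℝ)) * x + 1) ν
              + (1 / 2 : ℝ≥0∞) • Measure.map (fun x : ℝ => ((a : ℝ) / (b : ℝ)) * x - 1) ν)
    {t : ℝ} (ht : t ∈ OsetAB a b) :
    ∫ x : ℝ, Complex.exp (2 * Real.pi * Complex.I * t * x) ∂ν = 0 := by
  obtain ⟨n, k, hk⟩ := ht
  induction n generalizing t with
  | zero =>
    rw [fourier_functional_equation _ ν hinv t]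
    have hcos : Complex.cos (2 * Real.pi * t) = 0 := by
      rw [Complex.cos_eq_zero_iff]
      refine ⟨k, ?_⟩
      rw [hk]
      push_cast
      ring
    rw [hcos, zero_mul]
  | succ n ih =>
    rw [fourier_functional_equation _ ν hinv t, ih, mul_zero]
    have ha' : (a : ℝ) ≠ 0 := by positivity
    have hb' : (b : ℝ) ≠ 0 := by positivity
    rw [hk, pow_succ]
    field_simp

/-- Let `a, b` be coprime positive integers with `a < b` and `b` even.  The set
`Γ = {0} ∪ {b^i/(4a) : i ≥ 1}` is infinite and the difference of any two distinct
elements of `Γ` lies in `𝒪_{a,b}`; consequently, for `λ = a/b` with `b` even, there is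
a countably infinite collection of mutually orthogonal exponentials in `L²(X_λ, ν_λ)`. -/
theorem even_denominator_infinite_orthogonal_collection
    (a b : ℕ) (ha : 0 < a) (hab : a < b) (hco : Nat.Coprime a b) (hb : Even b)
    (ν : Measure ℝ) [IsProbabilityMeasure ν]
    (hatom : ∀ x : ℝ, ν {x} = 0)
    (hinv : ν = (1 / 2 : ℝ≥0∞) • Measure.map (fun x : ℝ => ((a : ℝ) / (b : ℝ)) * x + 1) ν
              + (1 / 2 : ℝ≥0∞) • Measure.map (fun x : ℝ => ((a : ℝ) / (b : ℝ)) * x - 1) ν) :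
    (({0} ∪ {x : ℝ | ∃ i : ℕ, 1 ≤ i ∧ x = (b : ℝ) ^ i / (4 * (a : ℝ))} : Set ℝ).Infinite) ∧
    (∀ γ ∈ ({0} ∪ {x : ℝ | ∃ i : ℕ, 1 ≤ i ∧ x = (b : ℝ) ^ i / (4 * (a : ℝ))} : Set ℝ),
      ∀ γ' ∈ ({0} ∪ {x : ℝ | ∃ i : ℕ, 1 ≤ i ∧ x = (b : ℝ) ^ i / (4 * (a : ℝ))} : Set ℝ),
        γ ≠ γ' → γ - γ' ∈ OsetAB a b) ∧
    (∃ Γ : Set ℝ, Γ.Countable ∧ Γ.Infinite ∧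
      ∀ γ ∈ Γ, ∀ γ' ∈ Γ, γ ≠ γ' →
        (∫ x : ℝ, Complex.exp (2 * Real.pi * Complex.I * γ * x)
          * (starRingEnd ℂ) (Complex.exp (2 * Real.pi * Complex.I * γ' * x)) ∂ν) = 0) := by
  have hbpos : 0 < b := ha.trans hab
  have hb1 : 1 < b := lt_of_le_of_lt ha hab
  have haodd : Odd a := by
    rw [← Nat.not_even_iff_odd]
    intro he
    have h2 := Nat.dvd_gcd he.two_dvd hb.two_dvd
    rw [hco.gcd_eq_one] at h2
    omega
  set S : Set ℝ := {0} ∪ {x : ℝ | ∃ i : ℕ, 1 ≤ i ∧ x = (b : ℝ) ^ i / (4 * (a : ℝ))} with hS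
  have hinj : Function.Injective fun i : ℕ => (b : ℝ) ^ (i + 1) / (4 * (a : ℝ)) := by
    intro i j hij
    have h4a : (4 * (a : ℝ)) ≠ 0 := by positivity
    have h1 : (b : ℝ) ^ (i + 1) = (b : ℝ) ^ (j + 1) := (div_left_inj' h4a).1 hij
    have h2 : b ^ (i + 1) = b ^ (j + 1) := by exact_mod_cast h1
    have := Nat.pow_right_injective hb1 h2
    omega
  have hinf : S.Infinite := by
    refine (Set.infinite_range_of_injective hinj).mono ?_
    rintro _ ⟨i, rfl⟩
    exact Or.inr ⟨i + 1, by omega, rfl⟩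
  have hcount : S.Countable := by
    refine (Set.countable_singleton 0).union
      ((Set.countable_range fun i : ℕ => (b : ℝ) ^ i / (4 * (a : ℝ))).mono ?_)
    rintro _ ⟨i, -, rfl⟩
    exact ⟨i, rfl⟩
  have hzero : ∀ i : ℕ, (b : ℝ) ^ (i + 1) / (4 * (a : ℝ)) - 0 ∈ OsetAB a b := fun i => by
    simpa using pow_div_mul_odd_mem_OsetAB b ha haodd i odd_one
  have hdiff : ∀ γ ∈ S, ∀ γ' ∈ S, γ ≠ γ' → γ - γ' ∈ OsetAB a b := by
    rintro γ (rfl | ⟨i, hi, rfl⟩) γ' (rfl | ⟨j, hj, rfl⟩) hne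
    · exact absurd rfl hne
    · obtain ⟨j, rfl⟩ := Nat.exists_eq_add_of_le' hj
      exact sub_mem_OsetAB_symm (hzero j)
    · obtain ⟨i, rfl⟩ := Nat.exists_eq_add_of_le' hi
      exact hzero i
    · obtain ⟨i, rfl⟩ := Nat.exists_eq_add_of_le' hi
      obtain ⟨j, rfl⟩ := Nat.exists_eq_add_of_le' hj
      rcases lt_trichotomy i j with h | rfl | h
      · exact sub_mem_OsetAB_symm (pow_sub_pow_mem_OsetAB ha haodd hb h)
      · exact absurd rfl hne
      · exact pow_sub_pow_mem_OsetAB ha haodd hb h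
  refine ⟨hinf, hdiff, S, hcount, hinf, fun γ hγ γ' hγ' hne => ?_⟩
  rw [← fourier_eq_zero_of_mem_OsetAB ha hbpos ν hinv (hdiff γ hγ γ' hγ' hne)]
  congr 1
  funext x
  rw [← Complex.exp_conj, ← Complex.exp_add]
  simp only [map_mul, Complex.conj_ofReal, Complex.conj_I, map_ofNat]
  push_cast
  ring_nf
end

section
/- Let a, b be coprime positive integers with a < b and both a and b odd. If γ and γ' are distinct elements of 𝒪_{a,b} = { (1/4)(b/a)ⁿ(2k+1) : n ∈ ℕ₀, k ∈ ℤ }, then γ − γ' ∉ 𝒪_{a,b}. Consequently, any set Γ containing 0 whose nonzero elements lie in 𝒪_{a,b} and whose pairwise differences lie in 𝒪_{a,b} contains at most one nonzero element. -/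
/-- Clearing denominators with any sufficiently large power of `a` turns `4 x` into an odd
integer. The exponent is left free so that one power serves several elements at once. -/
theorem exists_odd_of_mem_OsetAB {a b : ℕ} (ha : 0 < a) (hao : Odd a) (hbo : Odd b) {x : ℝ}
    (hx : x ∈ OsetAB a b) :
    ∃ n : ℕ, ∀ N ≥ n, ∃ m : ℤ, Odd m ∧ 4 * (a : ℝ) ^ N * x = m := by
  obtain ⟨n, k, rfl⟩ := hx
  refine ⟨n, fun N hN => ?_⟩
  obtain ⟨d, rfl⟩ := Nat.exists_eq_add_of_le hN
  refine ⟨(a : ℤ) ^ d * (b : ℤ) ^ n * (2 * k + 1), ?_, ?_⟩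
  · have ha' : Odd (a : ℤ) := by exact_mod_cast hao
    have hb' : Odd (b : ℤ) := by exact_mod_cast hbo
    exact (ha'.pow.mul hb'.pow).mul ⟨k, rfl⟩
  · have ha0 : (a : ℝ) ≠ 0 := by exact_mod_cast ha.ne'
    push_cast
    rw [div_pow, pow_add]
    field_simp

/-- Let `a, b` be coprime positive integers with `a < b` and both odd.  If `γ ≠ γ'` are
elements of `𝒪_{a,b}`, then `γ − γ' ∉ 𝒪_{a,b}`; consequently any set `Γ` containing `0`,
with nonzero elements in `𝒪_{a,b}` and pairwise differences of distinct elements in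
`𝒪_{a,b}`, contains at most one nonzero element. -/
theorem both_odd_at_most_one_nonzero
    (a b : ℕ) (ha : 0 < a) (hab : a < b) (hco : Nat.Coprime a b)
    (hao : Odd a) (hbo : Odd b) :
    (∀ γ ∈ OsetAB a b, ∀ γ' ∈ OsetAB a b, γ ≠ γ' → γ - γ' ∉ OsetAB a b) ∧
    (∀ Γ : Set ℝ, (0 : ℝ) ∈ Γ →
      (∀ γ ∈ Γ, γ ≠ 0 → γ ∈ OsetAB a b) →
      (∀ γ ∈ Γ, ∀ γ' ∈ Γ, γ ≠ γ' → γ - γ' ∈ OsetAB a b) →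
      ∀ x ∈ Γ, ∀ y ∈ Γ, x ≠ 0 → y ≠ 0 → x = y) := by
  have key : ∀ γ ∈ OsetAB a b, ∀ γ' ∈ OsetAB a b, γ - γ' ∉ OsetAB a b := by
    intro γ hγ γ' hγ' hd
    obtain ⟨n₁, h₁⟩ := exists_odd_of_mem_OsetAB ha hao hbo hγ
    obtain ⟨n₂, h₂⟩ := exists_odd_of_mem_OsetAB ha hao hbo hγ'
    obtain ⟨n₃, h₃⟩ := exists_odd_of_mem_OsetAB ha hao hbo hd
    obtain ⟨p, hp, ep⟩ := h₁ (n₁ + n₂ + n₃) (by omega)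
    obtain ⟨q, hq, eq⟩ := h₂ (n₁ + n₂ + n₃) (by omega)
    obtain ⟨r, hr, er⟩ := h₃ (n₁ + n₂ + n₃) (by omega)
    have h : r = p - q := by
      rw [mul_sub, ep, eq] at er
      exact_mod_cast er.symm
    rw [h] at hr
    exact (Int.not_odd_iff_even.mpr (hp.sub_odd hq)) hr
  refine ⟨fun γ hγ γ' hγ' _ => key γ hγ γ' hγ', fun Γ _ hO hd x hx y hy hx0 hy0 => ?_⟩
  by_contra hne
  exact key x (hO x hx hx0) y (hO y hy hy0) (hd x hx y hy hne)
end

section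
/- Let a, b be coprime positive integers with a < b, a even and b odd. Let γ = (1/4)(b/a)ⁿ(2k+1) and γ' = (1/4)(b/a)^{n'}(2k'+1) with n, n' ∈ ℕ₀, k, k' ∈ ℤ, and γ ≠ γ'. If γ − γ' ∈ 𝒪_{a,b}, say γ − γ' = (1/4)(b/a)^p(2m+1) with p ∈ ℕ₀ and m ∈ ℤ, then: if n = n' then p < n, and if n ≠ n' then p = max{n, n'}. -/
/-- A strictly dominant power of `b / a` with odd coefficient cannot be cancelled by two
terms with smaller exponents: after multiplication by `a ^ N` it is the only odd term. -/
lemma ratio_pow_sum_ne_zero {a b : ℕ} (ha : 0 < a) (hae : Even a) (hbo : Odd b)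
    {i j N : ℕ} (hi : i < N) (hj : j < N) (x y : ℤ) {z : ℤ} (hz : Odd z) :
    ((b : ℝ) / a) ^ i * x + ((b : ℝ) / a) ^ j * y + ((b : ℝ) / a) ^ N * z ≠ 0 := by
  intro h
  have ha0 : (a : ℝ) ≠ 0 := by positivity
  have clear_denom : ∀ l ≤ N, (a : ℝ) ^ N * ((b : ℝ) / a) ^ l = a ^ (N - l) * b ^ l := by
    intro l hl
    rw [div_pow, ← Nat.sub_add_cancel hl, pow_add, Nat.add_sub_cancel]
    field_simp
  have hreal : (a : ℝ) ^ (N - i) * b ^ i * x + a ^ (N - j) * b ^ j * y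
      + a ^ (N - N) * b ^ N * z = 0 := by
    rw [← clear_denom i hi.le, ← clear_denom j hj.le, ← clear_denom N le_rfl]
    linear_combination (a : ℝ) ^ N * h
  have hZ : (a : ℤ) ^ (N - i) * b ^ i * x + a ^ (N - j) * b ^ j * y
      + a ^ (N - N) * b ^ N * z = 0 := by
    exact_mod_cast hreal
  have haZ : Even (a : ℤ) := by exact_mod_cast hae
  have hbZ : Odd (b : ℤ) := by exact_mod_cast hbo
  have h1 : Even ((a : ℤ) ^ (N - i) * b ^ i * x) :=
    ((haZ.pow_of_ne_zero (by omega)).mul_right _).mul_right _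
  have h2 : Even ((a : ℤ) ^ (N - j) * b ^ j * y) :=
    ((haZ.pow_of_ne_zero (by omega)).mul_right _).mul_right _
  have h3 : Odd ((a : ℤ) ^ (N - N) * b ^ N * z) := by
    simpa using hbZ.pow.mul hz
  have hodd := (h1.add h2).add_odd h3
  rw [hZ] at hodd
  simp at hodd

/-- Let `a, b` be coprime positive integers with `a < b`, `a` even and `b` odd, and let
`γ = (1/4)(b/a)ⁿ(2k+1)`, `γ' = (1/4)(b/a)^{n'}(2k'+1)` be distinct.  If
`γ − γ' = (1/4)(b/a)^p(2m+1) ∈ 𝒪_{a,b}`, then: if `n = n'` then `p < n`, and if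
`n ≠ n'` then `p = max{n, n'}`. -/
theorem diff_in_Oset_exponent_cases
    (a b : ℕ) (ha : 0 < a) (hab : a < b) (hco : Nat.Coprime a b)
    (hae : Even a) (hbo : Odd b)
    (n n' p : ℕ) (k k' m : ℤ)
    (γ γ' : ℝ)
    (hγ : γ = (1 / 4) * ((b : ℝ) / (a : ℝ)) ^ n * (2 * (k : ℝ) + 1))
    (hγ' : γ' = (1 / 4) * ((b : ℝ) / (a : ℝ)) ^ n' * (2 * (k' : ℝ) + 1))
    (hne : γ ≠ γ')
    (hdiff : γ - γ' = (1 / 4) * ((b : ℝ) / (a : ℝ)) ^ p * (2 * (m : ℝ) + 1)) :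
    (n = n' → p < n) ∧ (n ≠ n' → p = max n n') := by
  have hr : (b : ℝ) / a ≠ 0 := by
    have : 0 < b := ha.trans hab
    positivity
  have hsum : ((b : ℝ) / a) ^ n * (2 * k + 1) - ((b : ℝ) / a) ^ n' * (2 * k' + 1)
      - ((b : ℝ) / a) ^ p * (2 * m + 1) = 0 := by
    linear_combination 4 * hdiff - 4 * hγ + 4 * hγ'
  have p_not_top : ¬ (n < p ∧ n' < p) := fun ⟨h, h'⟩ =>
    ratio_pow_sum_ne_zero ha hae hbo h h' (2 * k + 1) (-(2 * k' + 1)) (z := -(2 * m + 1))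
      (odd_two_mul_add_one m).neg (by push_cast; linear_combination hsum)
  have n_not_top : ¬ (n' < n ∧ p < n) := fun ⟨h, h'⟩ =>
    ratio_pow_sum_ne_zero ha hae hbo h h' (-(2 * k' + 1)) (-(2 * m + 1)) (z := 2 * k + 1)
      (odd_two_mul_add_one k) (by push_cast; linear_combination hsum)
  have nprime_not_top : ¬ (n < n' ∧ p < n') := fun ⟨h, h'⟩ =>
    ratio_pow_sum_ne_zero ha hae hbo h h' (2 * k + 1) (-(2 * m + 1)) (z := -(2 * k' + 1))
      (odd_two_mul_add_one k').neg (by push_cast; linear_combination hsum)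
  have not_all_eq : ¬ (n = n' ∧ n = p) := by
    rintro ⟨rfl, rfl⟩
    have hreal : (2 * k + 1 : ℝ) - (2 * k' + 1) - (2 * m + 1) = 0 :=
      (mul_eq_zero.mp (by linear_combination hsum)).resolve_left (pow_ne_zero n hr)
    have hZ : (2 * k + 1) - (2 * k' + 1) - (2 * m + 1) = 0 := by exact_mod_cast hreal
    omega
  omega
end

section
/- Let a, b be coprime positive integers with a < b, a even and b odd, and let n ∈ ℕ₀. If k, k' ∈ ℤ are distinct and k ≡ k' (mod a^{n+1}), then the difference (1/4)(b/a)ⁿ(2k+1) − (1/4)(b/a)ⁿ(2k'+1) does not belong to 𝒪_{a,b}. Consequently, in any set Γ of reals whose pairwise differences lie in 𝒪_{a,b}, at most one element of the form (1/4)(b/a)ⁿ(2k+1) can occur for each congruence class of k modulo a^{n+1}. -/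
/-- Let `a, b` be coprime positive integers with `a < b`, `a` even, `b` odd, and `n ∈ ℕ₀`.
If `k ≠ k'` are integers congruent mod `a^{n+1}`, then
`(1/4)(b/a)ⁿ(2k+1) − (1/4)(b/a)ⁿ(2k'+1) ∉ 𝒪_{a,b}`.  Consequently, in any set `Γ` of
reals whose pairwise differences of distinct elements lie in `𝒪_{a,b}`, at most one
element of the form `(1/4)(b/a)ⁿ(2k+1)` occurs per congruence class of `k` mod `a^{n+1}`. -/
theorem congruent_frequencies_not_orthogonal
    (a b : ℕ) (ha : 0 < a) (hab : a < b) (hco : Nat.Coprime a b)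
    (hae : Even a) (hbo : Odd b) (n : ℕ) :
    (∀ k k' : ℤ, k ≠ k' → k ≡ k' [ZMOD ((a : ℤ) ^ (n + 1))] →
      (1 / 4) * ((b : ℝ) / (a : ℝ)) ^ n * (2 * (k : ℝ) + 1)
        - (1 / 4) * ((b : ℝ) / (a : ℝ)) ^ n * (2 * (k' : ℝ) + 1) ∉ OsetAB a b) ∧
    (∀ Γ : Set ℝ, (∀ γ ∈ Γ, ∀ γ' ∈ Γ, γ ≠ γ' → γ - γ' ∈ OsetAB a b) →
      ∀ k k' : ℤ, k ≡ k' [ZMOD ((a : ℤ) ^ (n + 1))] →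
        (1 / 4) * ((b : ℝ) / (a : ℝ)) ^ n * (2 * (k : ℝ) + 1) ∈ Γ →
        (1 / 4) * ((b : ℝ) / (a : ℝ)) ^ n * (2 * (k' : ℝ) + 1) ∈ Γ →
        k = k') := by
  have haR : (a : ℝ) ≠ 0 := by exact_mod_cast ha.ne'
  have hbR : (b : ℝ) ≠ 0 := by exact_mod_cast (ha.trans hab).ne'
  have main : ∀ k k' : ℤ, k ≡ k' [ZMOD ((a : ℤ) ^ (n + 1))] →
      (1 / 4) * ((b : ℝ) / (a : ℝ)) ^ n * (2 * (k : ℝ) + 1)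
        - (1 / 4) * ((b : ℝ) / (a : ℝ)) ^ n * (2 * (k' : ℝ) + 1) ∉ OsetAB a b := by
    rintro k k' hk ⟨m, j, h⟩
    obtain ⟨t, ht⟩ := hk.symm.dvd
    have htR : (k : ℝ) - k' = (a : ℝ) ^ (n + 1) * t := by exact_mod_cast ht
    have hR : 2 * ((a : ℝ) * t * (b : ℝ) ^ n * (a : ℝ) ^ m) = (b : ℝ) ^ m * (2 * j + 1) := by
      have h2 : ((b : ℝ) / a) ^ n * (2 * ((k : ℝ) - k')) = ((b : ℝ) / a) ^ m * (2 * j + 1) := by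
        linear_combination 4 * h
      rw [htR, div_pow, div_pow] at h2
      field_simp at h2
      apply mul_left_cancel₀ (pow_ne_zero n haR)
      linear_combination h2
    have hZ : 2 * ((a : ℤ) * t * (b : ℤ) ^ n * (a : ℤ) ^ m) = (b : ℤ) ^ m * (2 * j + 1) := by
      exact_mod_cast hR
    have hodd : Odd ((b : ℤ) ^ m * (2 * j + 1)) :=
      (Odd.pow (by exact_mod_cast hbo)).mul ⟨j, rfl⟩
    rw [← hZ] at hodd
    exact Int.not_odd_iff_even.mpr (even_two_mul _) hodd
  refine ⟨fun k k' _ => main k k', fun Γ hΓ k k' hk h1 h2 => ?_⟩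
  by_contra hne
  refine main k k' hk (hΓ _ h1 _ h2 fun heq => hne ?_)
  have hq : (1 / 4 : ℝ) * ((b : ℝ) / a) ^ n ≠ 0 := by positivity
  have := mul_left_cancel₀ hq heq
  have h3 : (k : ℝ) = k' := by linarith
  exact_mod_cast h3
end

section
/- Let ν be a Borel probability measure on ℝ with compact support, and let Γ ⊆ ℝ be such that the exponentials {e_γ : γ ∈ Γ} form an orthonormal family in L²(ν). Then {e_γ : γ ∈ Γ} is an orthonormal basis of L²(ν) if and only if for every t ∈ ℝ one has Σ_{γ ∈ Γ} |ν̂(t − γ)|² = 1, where ν̂(s) = ∫_ℝ e^{2πi x s} dν(x). -/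
/-!
For an orthonormal family `v` in a Hilbert space, `‖f‖² - ∑_{i ∈ s} |⟨v i, f⟩|²` is the squared
distance from `f` to the partial Fourier sum over the finite set `s`. Hence Parseval's equality
for a single vector `f` says exactly that `f` lies in the closed span of `v`. Since
`⟨e_γ, e_t⟩ = ν̂(t - γ)` and `‖e_t‖ = 1`, the sum condition says that every exponential `e_t`,
`t ∈ ℝ`, lies in the closed span of `{e_γ : γ ∈ Γ}`.

It remains to see that all exponentials together are total in `L²(ν)`. A function orthogonal to
all of them is integrable, and so are its real and imaginary parts, each with vanishing Fourier
transform against `ν`. For a real integrable `g` this means that the finite measures `g⁺ ν` and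
`g⁻ ν` have the same characteristic function; they therefore coincide, and `g = 0` almost
everywhere.
-/

open MeasureTheory
open scoped ENNReal

open Filter Topology ComplexConjugate

/-- Equality in Bessel's inequality for `x` puts `x` in the closed span. -/
lemma mem_closure_span_of_bessel_eq {ι H : Type*} [NormedAddCommGroup H] [InnerProductSpace ℂ H]
    {v : ι → H} (hv : Orthonormal ℂ v) (x : H) (hx : ∑' i, ‖inner ℂ (v i) x‖ ^ 2 = ‖x‖ ^ 2) :
    x ∈ (Submodule.span ℂ (Set.range v)).topologicalClosure := by
  have key : ∀ s : Finset ι, ‖x - ∑ i ∈ s, inner ℂ (v i) x • v i‖ ^ 2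
      = ‖x‖ ^ 2 - ∑ i ∈ s, ‖inner ℂ (v i) x‖ ^ 2 := by
    intro s
    have h₂ : (∑ i ∈ s, ∑ j ∈ s, inner ℂ (v i) x * inner ℂ x (v j) * inner ℂ (v j) (v i))
        = (∑ k ∈ s, inner ℂ (v k) x * inner ℂ x (v k) : ℂ) := hv.inner_left_right_finset
    have h₃ : ∀ z : ℂ, RCLike.re (z * conj z) = ‖z‖ ^ 2 := by
      intro z
      simp only [RCLike.mul_conj]
      norm_cast
    rw [@norm_sub_sq ℂ, sub_add]
    simp only [@InnerProductSpace.norm_sq_eq_re_inner ℂ H, inner_sum, sum_inner]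
    simp only [inner_smul_right, two_mul, inner_smul_left, inner_conj_symm, ← mul_assoc, h₂,
      add_sub_cancel_right, sub_right_inj]
    simp only [map_sum, ← inner_conj_symm x, ← h₃]
  have hsum : Tendsto (fun s : Finset ι => ∑ i ∈ s, ‖inner ℂ (v i) x‖ ^ 2) atTop
      (𝓝 (‖x‖ ^ 2)) := by
    have := (hv.inner_products_summable (x := x)).hasSum
    rwa [hx] at this
  have hsq : Tendsto (fun s : Finset ι => ‖x - ∑ i ∈ s, inner ℂ (v i) x • v i‖ ^ 2) atTop
      (𝓝 0) := by
    simp only [key]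
    have := hsum.const_sub (‖x‖ ^ 2)
    rwa [sub_self (‖x‖ ^ 2)] at this
  have hnorm : Tendsto (fun s : Finset ι => ‖x - ∑ i ∈ s, inner ℂ (v i) x • v i‖) atTop
      (𝓝 0) := by
    simpa using hsq.sqrt
  have hlim : Tendsto (fun s : Finset ι => ∑ i ∈ s, inner ℂ (v i) x • v i) atTop (𝓝 x) := by
    rw [tendsto_iff_norm_sub_tendsto_zero]
    simpa only [norm_sub_rev] using hnorm
  refine mem_closure_of_tendsto hlim (Eventually.of_forall fun s => ?_)
  exact Submodule.sum_mem _ fun i _ =>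
    Submodule.smul_mem _ _ (Submodule.subset_span (Set.mem_range_self i))

lemma parseval_of_closure_span_eq_top {ι H : Type*} [NormedAddCommGroup H] [InnerProductSpace ℂ H]
    [CompleteSpace H] {v : ι → H} (hv : Orthonormal ℂ v)
    (h : (Submodule.span ℂ (Set.range v)).topologicalClosure = ⊤) (x : H) :
    ∑' i, ‖inner ℂ (v i) x‖ ^ 2 = ‖x‖ ^ 2 := by
  have hb := (HilbertBasis.mk hv h.ge).tsum_inner_mul_inner x x
  simp only [HilbertBasis.coe_mk] at hb
  have hterm : ∀ i, inner ℂ x (v i) * inner ℂ (v i) x = ((‖inner ℂ (v i) x‖ ^ 2 : ℝ) : ℂ) := by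
    intro i
    rw [← inner_conj_symm x (v i), RCLike.conj_mul]
    norm_cast
  simp only [hterm, inner_self_eq_norm_sq_to_K] at hb
  rw [← Complex.ofReal_tsum] at hb
  exact Complex.ofReal_injective (hb.trans (Complex.ofReal_pow _ _).symm)

lemma integrable_exp_mul {ν : Measure ℝ} {g : ℝ → ℂ} (hg : Integrable g ν) (t : ℝ) :
    Integrable (fun x : ℝ => Complex.exp (t * x * Complex.I) * g x) ν := by
  refine hg.bdd_mul (c := 1) (by fun_prop) (Eventually.of_forall fun x => ?_)
  exact_mod_cast (Complex.norm_exp_ofReal_mul_I (t * x)).le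

/-- A real integrable density with vanishing Fourier transform is zero: its positive and
negative parts define finite measures with equal characteristic functions. -/
lemma real_ae_eq_zero_of_fourier_eq_zero {ν : Measure ℝ} [IsFiniteMeasure ν] {g : ℝ → ℝ}
    (hg : Integrable g ν)
    (h : ∀ t : ℝ, ∫ x : ℝ, Complex.exp (t * x * Complex.I) * (g x : ℂ) ∂ν = 0) :
    g =ᵐ[ν] 0 := by
  have hp := isFiniteMeasure_withDensity_ofReal hg.2
  have hn := isFiniteMeasure_withDensity_ofReal hg.neg.2
  have hpm : AEMeasurable (fun x => ENNReal.ofReal (g x)) ν := hg.aemeasurable.ennreal_ofReal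
  have hnm : AEMeasurable (fun x => ENNReal.ofReal ((-g) x)) ν :=
    hg.neg.aemeasurable.ennreal_ofReal
  have heq : ν.withDensity (fun x => ENNReal.ofReal (g x))
      = ν.withDensity (fun x => ENNReal.ofReal ((-g) x)) := by
    refine Measure.ext_of_charFun (funext fun t => ?_)
    rw [charFun_apply_real, charFun_apply_real,
      integral_withDensity_eq_integral_toReal_smul₀ hpm (by simp),
      integral_withDensity_eq_integral_toReal_smul₀ hnm (by simp), ← sub_eq_zero, ← integral_sub]
    · rw [← h t]
      congr 1 with x
      rw [ENNReal.toReal_ofReal', ENNReal.toReal_ofReal', Complex.real_smul, Complex.real_smul,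
        ← sub_mul, ← Complex.ofReal_sub, Pi.neg_apply, max_zero_sub_eq_self, mul_comm]
    · have := integrable_exp_mul (hg.pos_part.ofReal (𝕜 := ℂ)) t
      refine this.congr (Eventually.of_forall fun x => ?_)
      simp [ENNReal.toReal_ofReal', mul_comm]
    · have := integrable_exp_mul (hg.neg_part.ofReal (𝕜 := ℂ)) t
      refine this.congr (Eventually.of_forall fun x => ?_)
      simp [ENNReal.toReal_ofReal', mul_comm]
  rw [withDensity_eq_iff_of_sigmaFinite hpm hnm] at heq
  filter_upwards [heq] with x hx
  have hx' := congrArg ENNReal.toReal hx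
  rw [ENNReal.toReal_ofReal', ENNReal.toReal_ofReal', Pi.neg_apply] at hx'
  rw [Pi.zero_apply, ← max_zero_sub_eq_self (g x), hx', sub_self]

lemma ae_eq_zero_of_fourier_eq_zero {ν : Measure ℝ} [IsFiniteMeasure ν] {g : ℝ → ℂ}
    (hg : Integrable g ν)
    (h : ∀ t : ℝ, ∫ x : ℝ, Complex.exp (t * x * Complex.I) * g x ∂ν = 0) :
    g =ᵐ[ν] 0 := by
  have hgc : Integrable (fun x => conj (g x)) ν :=
    (LinearIsometryEquiv.integrable_comp_iff Complex.conjLIE).2 hg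
  -- The transform of `conj g` at `t` is the conjugate of the transform of `g` at `-t`.
  have hc : ∀ t : ℝ, ∫ x : ℝ, Complex.exp (t * x * Complex.I) * conj (g x) ∂ν = 0 := by
    intro t
    rw [← map_zero (starRingEnd ℂ), ← h (-t), ← integral_conj]
    congr 1 with x
    rw [map_mul, ← Complex.exp_conj]
    simp
  have hre := real_ae_eq_zero_of_fourier_eq_zero hg.re (fun t => by
    have e : ∀ x : ℝ, Complex.exp (t * x * Complex.I) * ((RCLike.re (g x) : ℝ) : ℂ)
        = (1 / 2) * (Complex.exp (t * x * Complex.I) * g x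
          + Complex.exp (t * x * Complex.I) * conj (g x)) := by
      intro x
      have := Complex.re_eq_add_conj (g x)
      simp only [RCLike.re_to_complex, this]
      ring
    simp only [e]
    rw [integral_const_mul, integral_add (integrable_exp_mul hg t) (integrable_exp_mul hgc t),
      h, hc]
    simp)
  have him := real_ae_eq_zero_of_fourier_eq_zero hg.im (fun t => by
    have e : ∀ x : ℝ, Complex.exp (t * x * Complex.I) * ((RCLike.im (g x) : ℝ) : ℂ)
        = (1 / (2 * Complex.I)) * (Complex.exp (t * x * Complex.I) * g x
          - Complex.exp (t * x * Complex.I) * conj (g x)) := by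
      intro x
      have := Complex.im_eq_sub_conj (g x)
      simp only [RCLike.im_to_complex, this]
      ring
    simp only [e]
    rw [integral_const_mul, integral_sub (integrable_exp_mul hg t) (integrable_exp_mul hgc t),
      h, hc]
    simp)
  filter_upwards [hre, him] with x h1 h2
  exact Complex.ext h1 h2

/-- Let `ν` be a Borel probability measure on `ℝ` with compact support, and let
`Γ ⊆ ℝ` be such that the exponentials `{e_γ : γ ∈ Γ}` form an orthonormal family in
`L²(ν)`.  Then `{e_γ : γ ∈ Γ}` is an orthonormal basis of `L²(ν)` (i.e. the family is
total) if and only if `Σ_{γ ∈ Γ} |ν̂(t − γ)|² = 1` for every `t ∈ ℝ`, where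
`ν̂(s) = ∫ e^{2πixs} dν(x)`. -/
theorem onb_iff_parseval_sum_eq_one
    (ν : Measure ℝ) [IsProbabilityMeasure ν]
    (hsupp : ∃ K : Set ℝ, IsCompact K ∧ ν Kᶜ = 0)
    (Γ : Set ℝ)
    (E : ℝ → Lp ℂ 2 ν)
    (hE : ∀ γ : ℝ, (E γ : ℝ → ℂ) =ᵐ[ν] fun x : ℝ => Complex.exp (2 * Real.pi * Complex.I * γ * x))
    (hortho : Orthonormal ℂ (fun γ : Γ => E (γ : ℝ))) :
    (Submodule.span ℂ (Set.range (fun γ : Γ => E (γ : ℝ)))).topologicalClosure = ⊤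
      ↔ ∀ t : ℝ,
        ∑' γ : Γ, ‖∫ x : ℝ, Complex.exp (2 * Real.pi * Complex.I * x * (t - (γ : ℝ))) ∂ν‖ ^ 2
          = 1 := by
  have hinner : ∀ s t : ℝ, inner ℂ (E s) (E t)
      = ∫ x : ℝ, Complex.exp (2 * Real.pi * Complex.I * x * (t - s)) ∂ν := by
    intro s t
    rw [L2.inner_def]
    refine integral_congr_ae ?_
    filter_upwards [hE s, hE t] with x hs ht
    rw [hs, ht, RCLike.inner_apply, ← Complex.exp_conj, ← Complex.exp_add]
    congr 1
    simp [Complex.conj_ofNat]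
    ring
  have hnorm : ∀ t : ℝ, ‖E t‖ ^ 2 = 1 := by
    intro t
    have h1 : inner ℂ (E t) (E t) = 1 := by
      rw [hinner]
      simp
    rw [inner_self_eq_norm_sq_to_K] at h1
    exact Complex.ofReal_injective ((Complex.ofReal_pow _ _).trans h1)
  simp only [← hinner]
  constructor
  · intro h t
    rw [← hnorm t]
    exact parseval_of_closure_span_eq_top hortho h (E t)
  · intro h
    have hmem : ∀ t : ℝ,
        E t ∈ (Submodule.span ℂ (Set.range (fun γ : Γ => E (γ : ℝ)))).topologicalClosure :=
      fun t => mem_closure_span_of_bessel_eq hortho (E t) ((h t).trans (hnorm t).symm)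
    rw [Submodule.topologicalClosure_eq_top_iff, Submodule.eq_bot_iff]
    intro f hf
    rw [← Submodule.orthogonal_closure] at hf
    have hfi : Integrable f ν := (Lp.memLp f).integrable (by norm_num)
    rw [Lp.eq_zero_iff_ae_eq_zero]
    refine ae_eq_zero_of_fourier_eq_zero hfi fun t => ?_
    -- `exp (i t x)` is the conjugate of the exponential of frequency `-t / (2π)`.
    have h0 := Submodule.inner_right_of_mem_orthogonal (hmem (-t / (2 * Real.pi))) hf
    rw [L2.inner_def] at h0
    rw [← h0]
    refine integral_congr_ae ?_
    filter_upwards [hE (-t / (2 * Real.pi))] with x hx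
    rw [hx, RCLike.inner_apply, ← Complex.exp_conj, mul_comm]
    congr 2
    have hpi : (Real.pi : ℂ) ≠ 0 := by exact_mod_cast Real.pi_ne_zero
    simp
    field_simp
end
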